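/- arXiv:1802.04052 — 4 statements merged into one kernel-verified Lean document; each statement's English description precedes it below -/
import Mathlib

section
/- Let λ ∈ ℂ and t ≥ 0. Then for every x ∈ X, D_λ(t)x belongs to D(A) and (λ − A)D_λ(t)x = c_λ(t)·x − S(t)x. -/
/-! Write `J r = ∫₀ʳ S(s)x ds`. Integrating by parts gives
`D_λ(t)x = J t + λ ∫₀ᵗ e^{λ(t-r)} J r dr`, and every `J r` lies in the domain with
`A (J r) = S(r)x - r^α/Γ(α+1) x`, which is continuous in `r`. Since `A` has a bounded resolvent it
is closed, so it may be moved inside the integral (`closed_integral`). The same integration by parts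
(`exp_parts`) applied to `r^α/Γ(α+1)`, whose derivative is `r^(α-1)/Γ(α)`, turns the remaining
scalar terms into `c_λ(t)`. -/

open MeasureTheory intervalIntegral Pointwise

noncomputable section

/-- `D_λ(t) x = ∫₀ᵗ e^{λ(t−r)} S(r) x dr`. -/
noncomputable def Dop {X : Type*} [NormedAddCommGroup X] [NormedSpace ℂ X]
    (S : ℝ → X →L[ℂ] X) (l : ℂ) (t : ℝ) (x : X) : X :=
  ∫ r in (0:ℝ)..t, Complex.exp (l * ((t - r : ℝ) : ℂ)) • S r x

/-- `c_λ(t) = ∫₀ᵗ e^{λ(t−s)} s^{α−1}/Γ(α) ds`. -/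
noncomputable def cConst (α : ℝ) (l : ℂ) (t : ℝ) : ℂ :=
  ∫ s in (0:ℝ)..t,
    Complex.exp (l * ((t - s : ℝ) : ℂ)) * ((s ^ (α - 1) : ℝ) : ℂ) / ((Real.Gamma α : ℝ) : ℂ)

/-- `L_λ(t) x = ∫₀ᵗ e^{−λs} D_λ(s) x ds`. -/
noncomputable def Lop {X : Type*} [NormedAddCommGroup X] [NormedSpace ℂ X]
    (S : ℝ → X →L[ℂ] X) (l : ℂ) (t : ℝ) (x : X) : X :=
  ∫ s in (0:ℝ)..t, Complex.exp (-l * ((s : ℝ) : ℂ)) • Dop S l s x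

/-- `φ_λ(t) = ∫₀ᵗ ∫₀^τ e^{−λr} r^{α−1}/Γ(α) dr dτ`. -/
noncomputable def phiConst (α : ℝ) (l : ℂ) (t : ℝ) : ℂ :=
  ∫ τ in (0:ℝ)..t, ∫ r in (0:ℝ)..τ,
    Complex.exp (-l * ((r : ℝ) : ℂ)) * ((r ^ (α - 1) : ℝ) : ℂ) / ((Real.Gamma α : ℝ) : ℂ)

/-- Iterated domain `D(A^n)` of the (possibly unbounded) operator given by the map `f = λ − A`
with domain `D`: `D^0 = X`, `D^{n+1} = {x ∈ D | f x ∈ D^n}`. -/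
def iterDom {X : Type*} (D : Set X) (f : X → X) : ℕ → Set X
  | 0 => Set.univ
  | n + 1 => {x | x ∈ D ∧ f x ∈ iterDom D f n}

/-- The bounded operator `c_λ(t)·I − S(t)`. -/
noncomputable def cSop {X : Type*} [NormedAddCommGroup X] [NormedSpace ℂ X]
    (S : ℝ → X →L[ℂ] X) (α : ℝ) (l : ℂ) (t : ℝ) : X →L[ℂ] X :=
  cConst α l t • ContinuousLinearMap.id ℂ X - S t

/-- `D_{λ,n}(t) = Σ_{i=1}^n binom(n,i)·(φ_λ(t))^{n−i}·e^{−iλt}·(−D_λ(t))^{i−1}`. -/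
noncomputable def Dln {X : Type*} [NormedAddCommGroup X] [NormedSpace ℂ X]
    (S : ℝ → X →L[ℂ] X) (α : ℝ) (l : ℂ) (t : ℝ) (n : ℕ) (x : X) : X :=
  ∑ i ∈ Finset.Icc 1 n,
    ((n.choose i : ℂ) * (phiConst α l t) ^ (n - i) * Complex.exp (-(i : ℂ) * l * (t : ℂ))) •
      ((fun y => - Dop S l t y)^[i - 1] x)

/-- Integration by parts against `e^{λ(t-r)}`. The derivative `j` is only needed on the open
interval, so that `j` may have an integrable singularity at `0`. -/
lemma exp_parts {E : Type*} [NormedAddCommGroup E] [NormedSpace ℂ E] [CompleteSpace E]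
    (l : ℂ) {t : ℝ} (ht : 0 ≤ t) (J j : ℝ → E) (hJ : ContinuousOn J (Set.Icc 0 t))
    (hd : ∀ r ∈ Set.Ioo 0 t, HasDerivAt J (j r) r)
    (hj : IntervalIntegrable j volume 0 t) (h0 : J 0 = 0) :
    ∫ r in (0:ℝ)..t, Complex.exp (l * ((t - r : ℝ) : ℂ)) • j r =
      J t + l • ∫ r in (0:ℝ)..t, Complex.exp (l * ((t - r : ℝ) : ℂ)) • J r := by
  have hec : Continuous fun r : ℝ => Complex.exp (l * ((t - r : ℝ) : ℂ)) := by fun_prop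
  have hed : ∀ r : ℝ, HasDerivAt (fun r : ℝ => Complex.exp (l * ((t - r : ℝ) : ℂ)))
      (-(l * Complex.exp (l * ((t - r : ℝ) : ℂ)))) r := by
    intro r
    have h1 : HasDerivAt (fun r : ℝ => ((t - r : ℝ) : ℂ)) (((-1 : ℝ)) : ℂ) r :=
      ((hasDerivAt_id r).const_sub t).ofReal_comp
    convert (h1.const_mul l).cexp using 1
    push_cast
    ring
  have hi1 : IntervalIntegrable (fun r : ℝ => Complex.exp (l * ((t - r : ℝ) : ℂ)) • j r)
      volume 0 t := hj.continuousOn_smul hec.continuousOn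
  have hi2 : IntervalIntegrable (fun r : ℝ => Complex.exp (l * ((t - r : ℝ) : ℂ)) • J r)
      volume 0 t := by
    apply ContinuousOn.intervalIntegrable
    rw [Set.uIcc_of_le ht]
    exact hec.continuousOn.smul hJ
  have hi3 : IntervalIntegrable (fun r : ℝ => l • (Complex.exp (l * ((t - r : ℝ) : ℂ)) • J r))
      volume 0 t := hi2.smul l
  have hF := integral_eq_sub_of_hasDerivAt_of_le ht
    (f := fun r : ℝ => Complex.exp (l * ((t - r : ℝ) : ℂ)) • J r)
    (f' := fun r : ℝ => Complex.exp (l * ((t - r : ℝ) : ℂ)) • j r -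
      l • (Complex.exp (l * ((t - r : ℝ) : ℂ)) • J r))
    (hec.continuousOn.smul hJ)
    (fun r hr => by
      refine ((hed r).smul (hd r hr)).congr_deriv ?_
      rw [neg_smul, mul_smul, ← sub_eq_add_neg])
    (hi1.sub hi3)
  rw [integral_sub hi1 hi3, intervalIntegral.integral_smul] at hF
  simp only [sub_self, h0, smul_zero, sub_zero, Complex.ofReal_zero, mul_zero, Complex.exp_zero,
    one_smul] at hF
  exact sub_eq_iff_eq_add.mp hF

/-- An operator with a bounded resolvent `R = (μ - A)⁻¹` commutes with integrals: if `J` takes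
values in the domain, then `J = R (μ J - A J)`, and the bounded `R` passes through the integral. -/
lemma closed_integral {X : Type*} [NormedAddCommGroup X] [NormedSpace ℂ X] [CompleteSpace X]
    (D : Submodule ℂ X) (A : X →ₗ[ℂ] X) {μ : ℂ} {R : X →L[ℂ] X} (hR : ∀ x : X, R x ∈ D)
    (hR1 : ∀ x : X, μ • R x - A (R x) = x) (hR2 : ∀ x ∈ D, R (μ • x - A x) = x)
    {t : ℝ} (ht : 0 ≤ t) (J G : ℝ → X) (hJ : IntervalIntegrable J volume 0 t)
    (hG : IntervalIntegrable G volume 0 t)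
    (hJD : ∀ r ∈ Set.Icc 0 t, J r ∈ D ∧ A (J r) = G r) :
    (∫ r in (0:ℝ)..t, J r) ∈ D ∧ A (∫ r in (0:ℝ)..t, J r) = ∫ r in (0:ℝ)..t, G r := by
  have hμJ : IntervalIntegrable (fun r => μ • J r) volume 0 t := hJ.smul μ
  have h1 : ∫ r in (0:ℝ)..t, J r = R (∫ r in (0:ℝ)..t, (μ • J r - G r)) := by
    rw [← R.intervalIntegral_comp_comm (hμJ.sub hG)]
    apply integral_congr
    intro r hr
    rw [Set.uIcc_of_le ht] at hr
    obtain ⟨ha, hb⟩ := hJD r hr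
    have := hR2 _ ha
    rw [hb] at this
    exact this.symm
  refine ⟨h1 ▸ hR _, ?_⟩
  have h2 := hR1 (∫ r in (0:ℝ)..t, (μ • J r - G r))
  rw [← h1, integral_sub hμJ hG, intervalIntegral.integral_smul] at h2
  exact sub_right_injective h2

/-- `c_λ(t) = t^α/Γ(α+1) + λ ∫₀ᵗ e^{λ(t-r)} r^α/Γ(α+1) dr`. -/
lemma cConst_eq {α : ℝ} (hα : 0 < α) (l : ℂ) {t : ℝ} (ht : 0 ≤ t) :
    cConst α l t = ((t ^ α : ℝ) : ℂ) / ((Real.Gamma (α + 1) : ℝ) : ℂ) +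
      l * ∫ r in (0:ℝ)..t, Complex.exp (l * ((t - r : ℝ) : ℂ)) *
        (((r ^ α : ℝ) : ℂ) / ((Real.Gamma (α + 1) : ℝ) : ℂ)) := by
  have hcont : Continuous fun r : ℝ => r ^ α := Real.continuous_rpow_const hα.le
  have h := exp_parts l ht
    (fun r : ℝ => ((r ^ α : ℝ) : ℂ) / ((Real.Gamma (α + 1) : ℝ) : ℂ))
    (fun r : ℝ => ((r ^ (α - 1) : ℝ) : ℂ) / ((Real.Gamma α : ℝ) : ℂ))
    (by fun_prop)
    (fun r hr => by
      have h1 := ((Real.hasDerivAt_rpow_const (p := α) (Or.inl hr.1.ne')).ofReal_comp).div_const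
        ((Real.Gamma (α + 1) : ℝ) : ℂ)
      refine h1.congr_deriv ?_
      rw [Real.Gamma_add_one hα.ne']
      have hg : ((Real.Gamma α : ℝ) : ℂ) ≠ 0 := by
        exact_mod_cast (Real.Gamma_pos_of_pos hα).ne'
      have ha : (α : ℂ) ≠ 0 := by exact_mod_cast hα.ne'
      push_cast
      field_simp)
    (by
      have h2 : IntervalIntegrable (fun r : ℝ => r ^ (α - 1)) volume 0 t :=
        intervalIntegrable_rpow' (by linarith)
      have h3 : IntervalIntegrable (fun r : ℝ => ((r ^ (α - 1) : ℝ) : ℂ)) volume 0 t :=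
        ⟨h2.1.ofReal, h2.2.ofReal⟩
      exact h3.div_const _)
    (by simp [Real.zero_rpow hα.ne'])
  simp only [smul_eq_mul] at h
  rw [← h, cConst]
  simp only [mul_div_assoc]

theorem stmt_0
    {X : Type*} [NormedAddCommGroup X] [NormedSpace ℂ X] [CompleteSpace X]
    (α : ℝ) (hα : 0 < α)
    (D : Submodule ℂ X) (A : X →ₗ[ℂ] X)
    (S : ℝ → X →L[ℂ] X)
    (hcont : ∀ x : X, ContinuousOn (fun u : ℝ => S u x) (Set.Ici (0:ℝ)))
    (hcomm : ∀ u v : ℝ, 0 ≤ u → 0 ≤ v → ∀ x : X, S u (S v x) = S v (S u x))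
    (hres : ∃ μ : ℂ, ∃ R : X →L[ℂ] X, (∀ x : X, R x ∈ D) ∧
      (∀ x : X, μ • R x - A (R x) = x) ∧ (∀ x ∈ D, R (μ • x - A x) = x))
    (hdom : ∀ u : ℝ, 0 ≤ u → ∀ x ∈ D, S u x ∈ D ∧ A (S u x) = S u (A x) ∧
      S u x = (((u ^ α : ℝ) : ℂ) / ((Real.Gamma (α + 1) : ℝ) : ℂ)) • x +
        ∫ s in (0:ℝ)..u, S s (A x))
    (hint : ∀ u : ℝ, 0 ≤ u → ∀ x : X, (∫ s in (0:ℝ)..u, S s x) ∈ D ∧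
      A (∫ s in (0:ℝ)..u, S s x) =
        S u x - (((u ^ α : ℝ) : ℂ) / ((Real.Gamma (α + 1) : ℝ) : ℂ)) • x)
    (l : ℂ) (t : ℝ)
    (ht : 0 ≤ t) :
    ∀ x : X, Dop S l t x ∈ D ∧
      l • Dop S l t x - A (Dop S l t x) = cConst α l t • x - S t x := by
  intro x
  obtain ⟨μ, R, hR, hR1, hR2⟩ := hres
  have hSc : ContinuousOn (fun u : ℝ => S u x) (Set.uIcc 0 t) := by
    rw [Set.uIcc_of_le ht]
    exact (hcont x).mono Set.Icc_subset_Ici_self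
  have hSi : IntervalIntegrable (fun u : ℝ => S u x) volume 0 t := hSc.intervalIntegrable
  set J : ℝ → X := fun r => ∫ s in (0:ℝ)..r, S s x with hJdef
  set g : ℝ → ℂ := fun r => ((r ^ α : ℝ) : ℂ) / ((Real.Gamma (α + 1) : ℝ) : ℂ) with hg
  have hgc : Continuous g := by
    have hcont' : Continuous fun r : ℝ => r ^ α := Real.continuous_rpow_const hα.le
    fun_prop
  have hJc : ContinuousOn J (Set.uIcc 0 t) :=
    continuousOn_primitive_interval' hSi Set.left_mem_uIcc
  have hec : Continuous fun r : ℝ => Complex.exp (l * ((t - r : ℝ) : ℂ)) := by fun_prop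
  have hJd : ∀ r ∈ Set.Ioo 0 t, HasDerivAt J (S r x) r := by
    intro r hr
    have hIci : ContinuousOn (fun u : ℝ => S u x) (Set.Ioi 0) :=
      (hcont x).mono Set.Ioi_subset_Ici_self
    apply integral_hasDerivAt_right
    · exact (hSc.mono (Set.uIcc_subset_uIcc_left
        (by rw [Set.uIcc_of_le ht]; exact ⟨hr.1.le, hr.2.le⟩))).intervalIntegrable
    · exact hIci.stronglyMeasurableAtFilter isOpen_Ioi r hr.1
    · exact hIci.continuousAt (Ioi_mem_nhds hr.1)
  have hparts : Dop S l t x =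
      J t + l • ∫ r in (0:ℝ)..t, Complex.exp (l * ((t - r : ℝ) : ℂ)) • J r :=
    exp_parts l ht J (fun r => S r x) (by rwa [Set.uIcc_of_le ht] at hJc) hJd hSi (by simp [hJdef])
  have hi1 : IntervalIntegrable (fun r : ℝ => Complex.exp (l * ((t - r : ℝ) : ℂ)) • S r x)
      volume 0 t := (hec.continuousOn.smul hSc).intervalIntegrable
  have hi2 : IntervalIntegrable (fun r : ℝ => (Complex.exp (l * ((t - r : ℝ) : ℂ)) * g r) • x)
      volume 0 t :=
    ((hec.mul hgc).smul continuous_const).intervalIntegrable _ _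
  obtain ⟨hmem, hA⟩ := closed_integral D A hR hR1 hR2 ht
    (fun r => Complex.exp (l * ((t - r : ℝ) : ℂ)) • J r)
    (fun r => Complex.exp (l * ((t - r : ℝ) : ℂ)) • S r x -
      (Complex.exp (l * ((t - r : ℝ) : ℂ)) * g r) • x)
    (hec.continuousOn.smul hJc).intervalIntegrable (hi1.sub hi2)
    (fun r hr => ⟨D.smul_mem _ (hint r hr.1 x).1, by
      rw [map_smul, (hint r hr.1 x).2, smul_sub, mul_smul]⟩)
  rw [integral_sub hi1 hi2, intervalIntegral.integral_smul_const] at hA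
  refine ⟨hparts ▸ D.add_mem (hint t ht x).1 (D.smul_mem _ hmem), ?_⟩
  have hAD : A (Dop S l t x) = (S t x - g t • x) + l • (Dop S l t x -
      (∫ r in (0:ℝ)..t, Complex.exp (l * ((t - r : ℝ) : ℂ)) * g r) • x) := by
    conv_lhs => rw [hparts, map_add, map_smul, hA, (hint t ht x).2]
    rfl
  rw [hAD, cConst_eq hα l ht, add_smul, mul_smul, smul_sub]
  abel
end
end

section
/- Let λ ∈ ℂ and t ≥ 0. Then for every x ∈ X, L_λ(t)x belongs to D(A) and (λ − A)L_λ(t)x + e^{−λt}·D_λ(t)x = φ_λ(t)·x. Moreover L_λ(t)D_λ(t) = D_λ(t)L_λ(t), and for every x ∈ D(A) one has (λ − A)L_λ(t)x = L_λ(t)(λ − A)x. -/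
/-!
Put `G(s) x = ∫₀ˢ e^{-λr} S(r) x dr`. Then `e^{-λs} D_λ(s) x = G(s) x`, so that
`L_λ(t) x = ∫₀ᵗ G(s) x ds`.

The operator `A` has a bounded resolvent, so it is closed and can be moved under integrals
(`closed_integral`). Integration by parts expresses `G(s) x` through the integrals
`∫₀ʳ S(u) x du`, which lie in the domain and whose images under `A` are given; this yields
`A G(s) x = e^{-λs} S(s) x + λ G(s) x - h(s) x` with `h(s) = ∫₀ˢ e^{-λr} r^{α-1}/Γ(α) dr`
(`A_prim`). One more integration gives `A L_λ(t) x = G(t) x + λ L_λ(t) x - φ_λ(t) x`, the first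
claim. When `x` is in the domain, moving `A` under both integrals gives
`A L_λ(t) x = L_λ(t) A x`, the third claim.

For the second claim, a bounded operator commuting with every `S(u)` commutes with `D_λ(t)` and
`L_λ(t)`. Applied to `S(u)` itself, this shows that `D_λ(t)` commutes with every `S(u)`; as
`D_λ(t)` is bounded, by the uniform boundedness principle (`Dop_clm`), it commutes with `L_λ(t)`.

Throughout, `S` is replaced by `u ↦ S (max u 0)`, which is strongly continuous on all of `ℝ` and
gives the same `D_λ(t)` and `L_λ(t)` for `t ≥ 0`.
-/

open MeasureTheory intervalIntegral Pointwise

noncomputable section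

section Aux

variable {X : Type*} [NormedAddCommGroup X] [NormedSpace ℂ X]

/-- `G(s) x = ∫₀ˢ e^{-λr} S(r) x dr`, which equals `e^{-λs} D_λ(s) x`. -/
def Gprim (S : ℝ → X →L[ℂ] X) (l : ℂ) (s : ℝ) (x : X) : X :=
  ∫ r in (0:ℝ)..s, Complex.exp (-l * ((r : ℝ) : ℂ)) • S r x

lemma Dop_eq (S : ℝ → X →L[ℂ] X) (l : ℂ) (s : ℝ) (x : X) :
    Dop S l s x = Complex.exp (l * (s : ℂ)) • Gprim S l s x := by
  unfold Dop Gprim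
  rw [← intervalIntegral.integral_smul]
  congr 1
  funext r
  rw [smul_smul, ← Complex.exp_add]
  congr 2
  push_cast
  ring

lemma exp_smul_Dop (S : ℝ → X →L[ℂ] X) (l : ℂ) (s : ℝ) (x : X) :
    Complex.exp (-l * (s : ℂ)) • Dop S l s x = Gprim S l s x := by
  rw [Dop_eq, smul_smul, ← Complex.exp_add]
  simp

lemma Lop_eq (S : ℝ → X →L[ℂ] X) (l : ℂ) (t : ℝ) (x : X) :
    Lop S l t x = ∫ s in (0:ℝ)..t, Gprim S l s x := by
  unfold Lop
  simp only [exp_smul_Dop]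

lemma exp_cont (l : ℂ) : Continuous fun r : ℝ => Complex.exp (-l * (r : ℂ)) := by
  fun_prop

lemma integrand_cont {S : ℝ → X →L[ℂ] X} (hS : ∀ x, Continuous fun u => S u x) (l : ℂ) (x : X) :
    Continuous fun r : ℝ => Complex.exp (-l * (r : ℂ)) • S r x :=
  (exp_cont l).smul (hS x)

lemma Gprim_cont {S : ℝ → X →L[ℂ] X} (hS : ∀ x, Continuous fun u => S u x) (l : ℂ) (x : X) :
    Continuous fun s : ℝ => Gprim S l s x :=
  intervalIntegral.continuous_primitive
    (fun a b => (integrand_cont hS l x).intervalIntegrable a b) 0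

lemma Gprim_add {S : ℝ → X →L[ℂ] X} (hS : ∀ x, Continuous fun u => S u x) (l : ℂ) (s : ℝ)
    (x y : X) : Gprim S l s (x + y) = Gprim S l s x + Gprim S l s y := by
  unfold Gprim
  rw [← intervalIntegral.integral_add ((integrand_cont hS l x).intervalIntegrable _ _)
    ((integrand_cont hS l y).intervalIntegrable _ _)]
  simp only [map_add, smul_add]

lemma Gprim_smul (S : ℝ → X →L[ℂ] X) (l : ℂ) (s : ℝ) (c : ℂ) (x : X) :
    Gprim S l s (c • x) = c • Gprim S l s x := by
  unfold Gprim
  rw [← intervalIntegral.integral_smul]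
  simp only [map_smul, smul_comm c]

variable [CompleteSpace X]

lemma Gprim_comm {S : ℝ → X →L[ℂ] X} (hS : ∀ x, Continuous fun u => S u x) (l : ℂ) (s : ℝ)
    (T : X →L[ℂ] X) (hT : ∀ u x, T (S u x) = S u (T x)) (x : X) :
    T (Gprim S l s x) = Gprim S l s (T x) := by
  unfold Gprim
  rw [← T.intervalIntegral_comp_comm ((integrand_cont hS l x).intervalIntegrable _ _)]
  simp only [map_smul, hT]

lemma Dop_comm {S : ℝ → X →L[ℂ] X} (hS : ∀ x, Continuous fun u => S u x) (l : ℂ) (s : ℝ)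
    (T : X →L[ℂ] X) (hT : ∀ u x, T (S u x) = S u (T x)) (x : X) :
    T (Dop S l s x) = Dop S l s (T x) := by
  rw [Dop_eq, Dop_eq, map_smul, Gprim_comm hS l s T hT]

lemma Lop_comm {S : ℝ → X →L[ℂ] X} (hS : ∀ x, Continuous fun u => S u x) (l : ℂ) (t : ℝ)
    (T : X →L[ℂ] X) (hT : ∀ u x, T (S u x) = S u (T x)) (x : X) :
    T (Lop S l t x) = Lop S l t (T x) := by
  rw [Lop_eq, Lop_eq, ← T.intervalIntegral_comp_comm ((Gprim_cont hS l x).intervalIntegrable _ _)]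
  simp only [Gprim_comm hS l _ T hT]

/-- `D_λ(t)` is a bounded operator: strong continuity on the compact interval between `0` and `t`
and the uniform boundedness principle bound the operator norms of `S` there. -/
lemma Dop_clm {S : ℝ → X →L[ℂ] X} (hS : ∀ x, Continuous fun u => S u x) (l : ℂ) (t : ℝ) :
    ∃ T : X →L[ℂ] X, ∀ x, T x = Dop S l t x := by
  obtain ⟨C, hC⟩ := banach_steinhaus
    (g := fun r : Set.uIcc (0:ℝ) t => Complex.exp (-l * ((r : ℝ) : ℂ)) • S r) (by
      intro x
      obtain ⟨C, hC⟩ := (isCompact_uIcc (a := (0:ℝ)) (b := t)).exists_bound_of_continuousOn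
        (integrand_cont hS l x).continuousOn
      exact ⟨C, fun r => hC r r.2⟩)
  let G : X →ₗ[ℂ] X :=
    { toFun := Gprim S l t
      map_add' := Gprim_add hS l t
      map_smul' := Gprim_smul S l t }
  refine ⟨Complex.exp (l * (t : ℂ)) • G.mkContinuous (C * |t|) ?_, fun x => (Dop_eq S l t x).symm⟩
  intro x
  have h := intervalIntegral.norm_integral_le_of_norm_le_const (a := (0:ℝ)) (b := t)
    (C := C * ‖x‖) (f := fun r : ℝ => Complex.exp (-l * (r : ℂ)) • S r x) (by
      intro r hr
      exact ContinuousLinearMap.le_of_opNorm_le _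
        (hC ⟨r, Set.uIoc_subset_uIcc hr⟩) x)
  rw [sub_zero] at h
  calc ‖G x‖ ≤ C * ‖x‖ * |t| := h
    _ = C * |t| * ‖x‖ := by ring

/-- An operator with a bounded resolvent at some point is closed; hence it can be moved under the
integral sign. -/
lemma closed_integral_s2 {D : Submodule ℂ X} {A : X →ₗ[ℂ] X}
    (hres : ∃ μ : ℂ, ∃ R : X →L[ℂ] X, (∀ x : X, R x ∈ D) ∧
      (∀ x : X, μ • R x - A (R x) = x) ∧ (∀ x ∈ D, R (μ • x - A x) = x))
    {f k : ℝ → X} (hf : Continuous f) (hk : Continuous k) {t : ℝ} (ht : 0 ≤ t)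
    (h : ∀ s, 0 ≤ s → f s ∈ D ∧ A (f s) = k s) :
    (∫ s in (0:ℝ)..t, f s) ∈ D ∧ A (∫ s in (0:ℝ)..t, f s) = ∫ s in (0:ℝ)..t, k s := by
  obtain ⟨μ, R, hRD, hR1, hR2⟩ := hres
  have hfi : IntervalIntegrable f volume 0 t := hf.intervalIntegrable _ _
  have hki : IntervalIntegrable k volume 0 t := hk.intervalIntegrable _ _
  have hμ : IntervalIntegrable (fun s => μ • f s) volume 0 t :=
    (hf.const_smul μ).intervalIntegrable _ _
  have key : (∫ s in (0:ℝ)..t, f s) =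
      R (μ • (∫ s in (0:ℝ)..t, f s) - ∫ s in (0:ℝ)..t, k s) := by
    rw [← intervalIntegral.integral_smul, ← intervalIntegral.integral_sub hμ hki,
      ← R.intervalIntegral_comp_comm (hμ.sub hki)]
    refine intervalIntegral.integral_congr fun s hs => ?_
    rw [Set.uIcc_of_le ht] at hs
    have := h s hs.1
    simp only [← this.2]
    exact (hR2 _ this.1).symm
  have h1 := hR1 (μ • (∫ s in (0:ℝ)..t, f s) - ∫ s in (0:ℝ)..t, k s)
  refine ⟨key ▸ hRD _, ?_⟩
  rw [← key] at h1
  exact sub_right_injective h1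

/-- Integration by parts against `e^{-λr}`. -/
lemma exp_by_parts (l : ℂ) {f : ℝ → X} (hf : Continuous f) (s : ℝ) :
    (∫ r in (0:ℝ)..s, Complex.exp (-l * (r : ℂ)) • f r) =
      Complex.exp (-l * (s : ℂ)) • (∫ r in (0:ℝ)..s, f r) +
        l • ∫ r in (0:ℝ)..s, Complex.exp (-l * (r : ℂ)) • ∫ u in (0:ℝ)..r, f u := by
  have hB : Continuous fun r : ℝ => ∫ u in (0:ℝ)..r, f u :=
    intervalIntegral.continuous_primitive (fun a b => hf.intervalIntegrable a b) 0
  have hE : Continuous fun r : ℝ => Complex.exp (-l * (r : ℂ)) • ∫ u in (0:ℝ)..r, f u :=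
    (exp_cont l).smul hB
  have hd : ∀ r : ℝ, HasDerivAt (fun s : ℝ => Complex.exp (-l * (s : ℂ)) • (∫ r in (0:ℝ)..s, f r) +
        l • ∫ r in (0:ℝ)..s, Complex.exp (-l * (r : ℂ)) • ∫ u in (0:ℝ)..r, f u)
      (Complex.exp (-l * (r : ℂ)) • f r) r := by
    intro r
    have h1 : HasDerivAt (fun r : ℝ => Complex.exp (-l * (r : ℂ)))
        (Complex.exp (-l * (r : ℂ)) * (-l * 1)) r :=
      ((Complex.ofRealCLM.hasDerivAt (x := r)).const_mul (-l)).cexp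
    have h2 := hf.integral_hasStrictDerivAt 0 r |>.hasDerivAt
    have h3 := hE.integral_hasStrictDerivAt 0 r |>.hasDerivAt
    refine ((h1.smul h2).add (h3.const_smul l)).congr_deriv ?_
    rw [mul_one, mul_neg, neg_smul, smul_smul, mul_comm l]
    abel
  rw [intervalIntegral.integral_eq_sub_of_hasDerivAt (fun r _ => hd r)
    (((exp_cont l).smul hf).intervalIntegrable _ _)]
  simp

lemma g_cont {α : ℝ} (hα : 0 < α) :
    Continuous fun r : ℝ => (((r ^ α : ℝ) : ℂ) / ((Real.Gamma (α + 1) : ℝ) : ℂ)) :=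
  (Complex.continuous_ofReal.comp (Real.continuous_rpow_const hα.le)).div_const _

lemma h_integrable {α : ℝ} (hα : 0 < α) (l : ℂ) (a b : ℝ) :
    IntervalIntegrable (fun r : ℝ => Complex.exp (-l * ((r : ℝ) : ℂ)) * ((r ^ (α - 1) : ℝ) : ℂ) /
      ((Real.Gamma α : ℝ) : ℂ)) volume a b := by
  have h := intervalIntegral.intervalIntegrable_rpow' (a := a) (b := b) (r := α - 1) (by linarith)
  have h' : IntervalIntegrable (fun r : ℝ => ((r ^ (α - 1) : ℝ) : ℂ)) volume a b :=
    ⟨h.1.ofReal, h.2.ofReal⟩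
  exact (h'.continuousOn_mul (exp_cont l).continuousOn).div_const _

/-- Integration by parts in `h(s) = ∫₀ˢ e^{-λr} r^{α-1}/Γ(α) dr`, where `r^{α-1}/Γ(α)` is the
derivative of `r^α/Γ(α+1)` away from the possible singularity at `0`. -/
lemma h_by_parts {α : ℝ} (hα : 0 < α) (l : ℂ) {s : ℝ} (hs : 0 ≤ s) :
    (∫ r in (0:ℝ)..s, Complex.exp (-l * ((r : ℝ) : ℂ)) * ((r ^ (α - 1) : ℝ) : ℂ) /
      ((Real.Gamma α : ℝ) : ℂ)) =
      Complex.exp (-l * (s : ℂ)) * (((s ^ α : ℝ) : ℂ) / ((Real.Gamma (α + 1) : ℝ) : ℂ)) +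
        l * ∫ r in (0:ℝ)..s, Complex.exp (-l * (r : ℂ)) *
          (((r ^ α : ℝ) : ℂ) / ((Real.Gamma (α + 1) : ℝ) : ℂ)) := by
  have hE : Continuous fun r : ℝ => Complex.exp (-l * (r : ℂ)) *
          (((r ^ α : ℝ) : ℂ) / ((Real.Gamma (α + 1) : ℝ) : ℂ)) := (exp_cont l).mul (g_cont hα)
  have hI := intervalIntegral.continuous_primitive
    (fun a b => hE.intervalIntegrable (μ := volume) a b) 0
  rw [intervalIntegral.integral_eq_sub_of_hasDerivAt_of_le hs
    (hE.add ((continuous_const (y := l)).mul hI)).continuousOn (f' := fun r : ℝ =>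
      Complex.exp (-l * ((r : ℝ) : ℂ)) * ((r ^ (α - 1) : ℝ) : ℂ) / ((Real.Gamma α : ℝ) : ℂ))
    ?_ (h_integrable hα l 0 s)]
  · simp [Real.zero_rpow hα.ne']
  · intro r hr
    have h1 : HasDerivAt (fun r : ℝ => Complex.exp (-l * (r : ℂ)))
        (Complex.exp (-l * (r : ℂ)) * (-l * 1)) r :=
      ((Complex.ofRealCLM.hasDerivAt (x := r)).const_mul (-l)).cexp
    have h2 := (Real.hasDerivAt_rpow_const (x := r) (p := α)
      (Or.inl hr.1.ne')).ofReal_comp.div_const ((Real.Gamma (α + 1) : ℝ) : ℂ)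
    have h3 := hE.integral_hasStrictDerivAt 0 r |>.hasDerivAt
    have hΓ : ((Real.Gamma α : ℝ) : ℂ) ≠ 0 := by
      exact_mod_cast (Real.Gamma_pos_of_pos hα).ne'
    have hα' : (α : ℂ) ≠ 0 := by exact_mod_cast hα.ne'
    refine ((h1.mul h2).add (h3.const_mul l)).congr_deriv ?_
    rw [Real.Gamma_add_one hα.ne']
    push_cast
    field_simp
    ring

/-- The formula `A G(s) x = e^{-λs} S(s) x + λ G(s) x - h(s) x`. -/
lemma A_prim {α : ℝ} (hα : 0 < α) {D : Submodule ℂ X} {A : X →ₗ[ℂ] X}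
    {S : ℝ → X →L[ℂ] X} (hS : ∀ x, Continuous fun u => S u x)
    (hres : ∃ μ : ℂ, ∃ R : X →L[ℂ] X, (∀ x : X, R x ∈ D) ∧
      (∀ x : X, μ • R x - A (R x) = x) ∧ (∀ x ∈ D, R (μ • x - A x) = x))
    (hint : ∀ u : ℝ, 0 ≤ u → ∀ x : X, (∫ s in (0:ℝ)..u, S s x) ∈ D ∧
      A (∫ s in (0:ℝ)..u, S s x) =
        S u x - (((u ^ α : ℝ) : ℂ) / ((Real.Gamma (α + 1) : ℝ) : ℂ)) • x)
    (l : ℂ) {s : ℝ} (hs : 0 ≤ s) (x : X) :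
    Gprim S l s x ∈ D ∧ A (Gprim S l s x) =
      Complex.exp (-l * (s : ℂ)) • S s x + l • Gprim S l s x -
        (∫ r in (0:ℝ)..s, Complex.exp (-l * ((r : ℝ) : ℂ)) * ((r ^ (α - 1) : ℝ) : ℂ) /
          ((Real.Gamma α : ℝ) : ℂ)) • x := by
  have hB : Continuous fun r : ℝ => ∫ u in (0:ℝ)..r, S u x :=
    intervalIntegral.continuous_primitive (fun a b => (hS x).intervalIntegrable a b) 0
  have hc1 := integrand_cont hS l x
  have hc2 : Continuous fun r : ℝ => (Complex.exp (-l * (r : ℂ)) *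
      (((r ^ α : ℝ) : ℂ) / ((Real.Gamma (α + 1) : ℝ) : ℂ))) • x :=
    ((exp_cont l).mul (g_cont hα)).smul continuous_const
  obtain ⟨hm, hA⟩ := closed_integral_s2 hres
    (f := fun r : ℝ => Complex.exp (-l * (r : ℂ)) • ∫ u in (0:ℝ)..r, S u x)
    (k := fun r : ℝ => Complex.exp (-l * (r : ℂ)) • S r x - (Complex.exp (-l * (r : ℂ)) *
      (((r ^ α : ℝ) : ℂ) / ((Real.Gamma (α + 1) : ℝ) : ℂ))) • x)
    ((exp_cont l).smul hB) (hc1.sub hc2) hs (fun r hr => by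
      obtain ⟨h1, h2⟩ := hint r hr x
      refine ⟨D.smul_mem _ h1, ?_⟩
      rw [map_smul, h2, smul_sub, smul_smul])
  rw [intervalIntegral.integral_sub (hc1.intervalIntegrable _ _) (hc2.intervalIntegrable _ _),
    intervalIntegral.integral_smul_const] at hA
  obtain ⟨h1, h2⟩ := hint s hs x
  have hG : Gprim S l s x = _ := exp_by_parts l (hS x) s
  refine ⟨hG ▸ D.add_mem (D.smul_mem _ h1) (D.smul_mem _ hm), ?_⟩
  have hA' : A (Gprim S l s x) = _ := congrArg A hG
  rw [hA', map_add, map_smul, map_smul, h2, hA, h_by_parts hα l hs]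
  unfold Gprim
  module

/-- The theorem for a family that is strongly continuous on all of `ℝ`. -/
lemma main_aux {α : ℝ} (hα : 0 < α) {D : Submodule ℂ X} {A : X →ₗ[ℂ] X}
    {S : ℝ → X →L[ℂ] X} (hS : ∀ x, Continuous fun u => S u x)
    (hcomm : ∀ u v : ℝ, ∀ x : X, S u (S v x) = S v (S u x))
    (hres : ∃ μ : ℂ, ∃ R : X →L[ℂ] X, (∀ x : X, R x ∈ D) ∧
      (∀ x : X, μ • R x - A (R x) = x) ∧ (∀ x ∈ D, R (μ • x - A x) = x))
    (hdom : ∀ u : ℝ, 0 ≤ u → ∀ x ∈ D, S u x ∈ D ∧ A (S u x) = S u (A x))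
    (hint : ∀ u : ℝ, 0 ≤ u → ∀ x : X, (∫ s in (0:ℝ)..u, S s x) ∈ D ∧
      A (∫ s in (0:ℝ)..u, S s x) =
        S u x - (((u ^ α : ℝ) : ℂ) / ((Real.Gamma (α + 1) : ℝ) : ℂ)) • x)
    (l : ℂ) {t : ℝ} (ht : 0 ≤ t) :
    (∀ x : X, Lop S l t x ∈ D ∧
      (l • Lop S l t x - A (Lop S l t x)) + Complex.exp (-l * (t : ℂ)) • Dop S l t x =
        phiConst α l t • x) ∧
    (∀ x : X, Lop S l t (Dop S l t x) = Dop S l t (Lop S l t x)) ∧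
    (∀ x ∈ D, l • Lop S l t x - A (Lop S l t x) = Lop S l t (l • x - A x)) := by
  refine ⟨fun x => ?_, fun x => ?_, fun x hx => ?_⟩
  · have hc1 := integrand_cont hS l x
    have hc2 : Continuous fun s => l • Gprim S l s x := (Gprim_cont hS l x).const_smul l
    have hc3 : Continuous fun s : ℝ => (∫ r in (0:ℝ)..s, Complex.exp (-l * ((r : ℝ) : ℂ)) *
        ((r ^ (α - 1) : ℝ) : ℂ) / ((Real.Gamma α : ℝ) : ℂ)) • x :=
      (intervalIntegral.continuous_primitive (h_integrable hα l) 0).smul continuous_const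
    have hc12 : Continuous fun s : ℝ => Complex.exp (-l * (s : ℂ)) • S s x + l • Gprim S l s x :=
      hc1.add hc2
    obtain ⟨hm, hA⟩ := closed_integral_s2 hres (Gprim_cont hS l x)
      (k := fun s : ℝ => Complex.exp (-l * (s : ℂ)) • S s x + l • Gprim S l s x -
        (∫ r in (0:ℝ)..s, Complex.exp (-l * ((r : ℝ) : ℂ)) * ((r ^ (α - 1) : ℝ) : ℂ) /
          ((Real.Gamma α : ℝ) : ℂ)) • x) (hc12.sub hc3) ht
      (fun s hs => A_prim hα hS hres hint l hs x)
    rw [intervalIntegral.integral_sub (hc12.intervalIntegrable _ _)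
      (hc3.intervalIntegrable _ _), intervalIntegral.integral_add (hc1.intervalIntegrable _ _)
      (hc2.intervalIntegrable _ _), intervalIntegral.integral_smul_const,
      intervalIntegral.integral_smul] at hA
    rw [exp_smul_Dop, Lop_eq]
    refine ⟨hm, ?_⟩
    rw [hA]
    unfold phiConst Gprim
    module
  · obtain ⟨T, hT⟩ := Dop_clm hS l t
    rw [← hT, ← hT]
    refine (Lop_comm hS l t T (fun u y => ?_) x).symm
    rw [hT, hT]
    exact (Dop_comm hS l t (S u) (fun v z => hcomm u v z) y).symm
  · have hG : ∀ s, 0 ≤ s → Gprim S l s x ∈ D ∧ A (Gprim S l s x) = Gprim S l s (A x) :=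
      fun s hs => closed_integral_s2 hres (integrand_cont hS l x) (integrand_cont hS l (A x)) hs
        (fun r hr => ⟨D.smul_mem _ (hdom r hr x hx).1, by rw [map_smul, (hdom r hr x hx).2]⟩)
    have hL := (closed_integral_s2 hres (Gprim_cont hS l x) (Gprim_cont hS l (A x)) ht hG).2
    have hlin : ∀ s, Gprim S l s (l • x - A x) = l • Gprim S l s x - Gprim S l s (A x) := by
      intro s
      rw [sub_eq_add_neg, ← neg_one_smul ℂ (A x), Gprim_add hS, Gprim_smul, Gprim_smul,
        neg_one_smul, ← sub_eq_add_neg]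
    rw [Lop_eq, Lop_eq, hL]
    simp only [hlin]
    have hc : Continuous fun s => l • Gprim S l s x := (Gprim_cont hS l x).const_smul l
    rw [intervalIntegral.integral_sub (hc.intervalIntegrable _ _)
      ((Gprim_cont hS l (A x)).intervalIntegrable _ _), intervalIntegral.integral_smul]

end Aux

theorem stmt_2
    {X : Type*} [NormedAddCommGroup X] [NormedSpace ℂ X] [CompleteSpace X]
    (α : ℝ) (hα : 0 < α)
    (D : Submodule ℂ X) (A : X →ₗ[ℂ] X)
    (S : ℝ → X →L[ℂ] X)
    (hcont : ∀ x : X, ContinuousOn (fun u : ℝ => S u x) (Set.Ici (0:ℝ)))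
    (hcomm : ∀ u v : ℝ, 0 ≤ u → 0 ≤ v → ∀ x : X, S u (S v x) = S v (S u x))
    (hres : ∃ μ : ℂ, ∃ R : X →L[ℂ] X, (∀ x : X, R x ∈ D) ∧
      (∀ x : X, μ • R x - A (R x) = x) ∧ (∀ x ∈ D, R (μ • x - A x) = x))
    (hdom : ∀ u : ℝ, 0 ≤ u → ∀ x ∈ D, S u x ∈ D ∧ A (S u x) = S u (A x) ∧
      S u x = (((u ^ α : ℝ) : ℂ) / ((Real.Gamma (α + 1) : ℝ) : ℂ)) • x +
        ∫ s in (0:ℝ)..u, S s (A x))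
    (hint : ∀ u : ℝ, 0 ≤ u → ∀ x : X, (∫ s in (0:ℝ)..u, S s x) ∈ D ∧
      A (∫ s in (0:ℝ)..u, S s x) =
        S u x - (((u ^ α : ℝ) : ℂ) / ((Real.Gamma (α + 1) : ℝ) : ℂ)) • x)
    (l : ℂ) (t : ℝ)
    (ht : 0 ≤ t) :
    (∀ x : X, Lop S l t x ∈ D ∧
      (l • Lop S l t x - A (Lop S l t x)) + Complex.exp (-l * (t : ℂ)) • Dop S l t x =
        phiConst α l t • x) ∧
    (∀ x : X, Lop S l t (Dop S l t x) = Dop S l t (Lop S l t x)) ∧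
    (∀ x ∈ D, l • Lop S l t x - A (Lop S l t x) = Lop S l t (l • x - A x)) := by
  set S' : ℝ → X →L[ℂ] X := fun u => S (max u 0) with hS'
  have hpos : ∀ u, 0 ≤ u → S' u = S u := fun u hu => by rw [hS']; simp only [max_eq_left hu]
  have hD : ∀ s, 0 ≤ s → ∀ x, Dop S l s x = Dop S' l s x := by
    intro s hs x
    refine intervalIntegral.integral_congr fun r hr => ?_
    rw [Set.uIcc_of_le hs] at hr
    simp only [hpos r hr.1]
  have hL : ∀ x, Lop S l t x = Lop S' l t x := by
    intro x
    refine intervalIntegral.integral_congr fun r hr => ?_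
    rw [Set.uIcc_of_le ht] at hr
    simp only [hD r hr.1]
  have hI : ∀ u, 0 ≤ u → ∀ x, (∫ s in (0:ℝ)..u, S' s x) = ∫ s in (0:ℝ)..u, S s x := by
    intro u hu x
    refine intervalIntegral.integral_congr fun r hr => ?_
    rw [Set.uIcc_of_le hu] at hr
    simp only [hpos r hr.1]
  simp only [hL, hD t ht]
  refine main_aux hα (fun x => ?_) (fun u v x => ?_) hres (fun u hu x hx => ?_)
    (fun u hu x => ?_) l ht
  · exact (hcont x).comp_continuous (continuous_id.max continuous_const) fun u =>
      Set.mem_Ici.2 (le_max_right _ _)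
  · exact hcomm _ _ (le_max_right _ _) (le_max_right _ _) x
  · rw [hpos u hu]
    exact ⟨(hdom u hu x hx).1, (hdom u hu x hx).2.1⟩
  · rw [hI u hu, hpos u hu]
    exact hint u hu x
end
end

section
/- Let λ ∈ ℂ, t ≥ 0 and n ≥ 1 an integer. There exists a bounded linear operator K_{λ,n}(t) on X such that for every x ∈ X, K_{λ,n}(t)x ∈ D(A^n) and (λ − A)^n K_{λ,n}(t)x + (D_λ(t))^n (D_{λ,n}(t))^n x = (φ_λ(t))^{n²}·x; moreover K_{λ,n}(t) commutes with D_λ(t) and with D_{λ,n}(t), and for every x ∈ D(A), (λ − A)K_{λ,n}(t)x = K_{λ,n}(t)(λ − A)x. -/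
/-!
The integral `L x = ∫₀ᵗ (t - r) e^{-λr} S(r) x dr` is `L_λ(t) x` with the order of integration
exchanged. Writing `S(r) x` as the derivative of `∫₀ʳ S(s) x ds`, which lies in `D(A)`, and
integrating by parts gives `(λ - A) L = B`, where `B = φ - e^{-λt} D_λ(t)` and `φ = φ_λ(t)`
(`resolvent_identity`). Here `A` passes under the integral because the existence of a bounded
resolvent makes it closed (`integral_mem_domain`).

As `L` and `D_λ(t)` are weighted integrals of `S`, they commute with each other and with the
resolvent of `A`, so `(λ - A)ⁿ Lⁿ = Bⁿ` (`iterate_pow`). The binomial theorem reads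
`Bⁿ = a - b` with `a = φⁿ` and `b = D_λ(t) D_{λ,n}(t)` (`binomial_split`). With the geometric sum
`P = ∑_{i < n} aⁱ b^{n-1-i}`, the operator `K = Lⁿ P` satisfies
`(λ - A)ⁿ K = (a - b) P = aⁿ - bⁿ`, which is the claimed identity. The commutation relations hold
since `K` is a polynomial in `L` and `D_λ(t)`; commuting with the resolvent yields commutation
with `A` on `D(A)` (`apply_comm_of_commute`).
-/

open MeasureTheory intervalIntegral Pointwise

noncomputable section

/-! ### Weighted integrals of the integrated semigroup -/

/-- `S` extended to negative times by its value at `0` is strongly continuous on all of `ℝ`. -/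
lemma continuous_apply_max {X : Type*} [NormedAddCommGroup X] [NormedSpace ℂ X]
    {S : ℝ → X →L[ℂ] X} (hcont : ∀ x : X, ContinuousOn (fun u : ℝ => S u x) (Set.Ici (0:ℝ)))
    (x : X) : Continuous (fun u : ℝ => S (max u 0) x) :=
  (hcont x).comp_continuous (f := fun u : ℝ => max u 0) (by fun_prop) (fun u => le_max_right u 0)

lemma integral_congr_max {X : Type*} [NormedAddCommGroup X] [NormedSpace ℂ X]
    (S : ℝ → X →L[ℂ] X) (w : ℝ → ℂ) {t : ℝ} (ht : 0 ≤ t) (x : X) :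
    ∫ r in (0:ℝ)..t, w r • S r x = ∫ r in (0:ℝ)..t, w r • S (max r 0) x := by
  apply intervalIntegral.integral_congr
  intro r hr
  rw [Set.uIcc_of_le ht] at hr
  simp only [max_eq_left hr.1]

lemma intervalIntegrable_smul {X : Type*} [NormedAddCommGroup X] [NormedSpace ℂ X]
    {S : ℝ → X →L[ℂ] X} (hcont : ∀ x : X, ContinuousOn (fun u : ℝ => S u x) (Set.Ici (0:ℝ)))
    {w : ℝ → ℂ} (hw : Continuous w) {t : ℝ} (ht : 0 ≤ t) (x : X) :
    IntervalIntegrable (fun r => w r • S r x) volume 0 t := by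
  apply ContinuousOn.intervalIntegrable
  rw [Set.uIcc_of_le ht]
  exact hw.continuousOn.smul ((hcont x).mono fun r hr => hr.1)

/-- A weighted integral `x ↦ ∫₀ᵗ w(r) S(r) x dr` is a bounded operator; the uniform bound on
`S` over `[0, t]` comes from the Banach–Steinhaus theorem. -/
lemma exists_weighted {X : Type*} [NormedAddCommGroup X] [NormedSpace ℂ X] [CompleteSpace X]
    {S : ℝ → X →L[ℂ] X} (hcont : ∀ x : X, ContinuousOn (fun u : ℝ => S u x) (Set.Ici (0:ℝ)))
    {w : ℝ → ℂ} (hw : Continuous w) {t : ℝ} (ht : 0 ≤ t) :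
    ∃ T : X →L[ℂ] X, ∀ x, T x = ∫ r in (0:ℝ)..t, w r • S r x := by
  obtain ⟨C, hC⟩ : ∃ C, ∀ r : Set.Icc (0:ℝ) t, ‖S r‖ ≤ C := by
    apply banach_steinhaus
    intro x
    obtain ⟨C, hC⟩ := isCompact_Icc.exists_bound_of_continuousOn
      ((hcont x).mono fun r (hr : r ∈ Set.Icc (0:ℝ) t) => hr.1)
    exact ⟨C, fun r => hC r r.2⟩
  obtain ⟨W, hW⟩ := isCompact_Icc.exists_bound_of_continuousOn
    (hw.continuousOn (s := Set.Icc (0:ℝ) t))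
  have hW0 : 0 ≤ W := (norm_nonneg _).trans (hW 0 ⟨le_rfl, ht⟩)
  let T : X →ₗ[ℂ] X :=
    { toFun := fun x => ∫ r in (0:ℝ)..t, w r • S r x
      map_add' := fun x y => by
        simp only [map_add, smul_add]
        exact intervalIntegral.integral_add (intervalIntegrable_smul hcont hw ht x)
          (intervalIntegrable_smul hcont hw ht y)
      map_smul' := fun c x => by
        simp only [map_smul, RingHom.id_apply, smul_comm _ c]
        exact intervalIntegral.integral_smul c _ }
  refine ⟨T.mkContinuous (W * C * |t - 0|) fun x => ?_, fun x => rfl⟩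
  have : ‖∫ r in (0:ℝ)..t, w r • S r x‖ ≤ (W * (C * ‖x‖)) * |t - 0| := by
    apply intervalIntegral.norm_integral_le_of_norm_le_const
    intro r hr
    rw [Set.uIoc_of_le ht] at hr
    have hr' : r ∈ Set.Icc (0:ℝ) t := ⟨hr.1.le, hr.2⟩
    rw [norm_smul]
    exact mul_le_mul (hW r hr') ((S r).le_of_opNorm_le (hC ⟨r, hr'⟩) x) (norm_nonneg _) hW0
  calc ‖T x‖ ≤ (W * (C * ‖x‖)) * |t - 0| := this
    _ = _ := by ring

/-- An operator commuting with every `S(r)` commutes with each weighted integral of `S`. -/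
lemma commute_weighted {X : Type*} [NormedAddCommGroup X] [NormedSpace ℂ X] [CompleteSpace X]
    {S : ℝ → X →L[ℂ] X} (hcont : ∀ x : X, ContinuousOn (fun u : ℝ => S u x) (Set.Ici (0:ℝ)))
    {w : ℝ → ℂ} (hw : Continuous w) {t : ℝ} (ht : 0 ≤ t) {T Q : X →L[ℂ] X}
    (hT : ∀ x, T x = ∫ r in (0:ℝ)..t, w r • S r x)
    (hQ : ∀ r, 0 ≤ r → Commute Q (S r)) : Commute Q T := by
  ext x
  change Q (T x) = T (Q x)
  rw [hT, hT, ← ContinuousLinearMap.intervalIntegral_comp_comm Q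
    (intervalIntegrable_smul hcont hw ht x)]
  apply intervalIntegral.integral_congr
  intro r hr
  rw [Set.uIcc_of_le ht] at hr
  have : Q (S r x) = S r (Q x) := DFunLike.congr_fun (hQ r hr.1) x
  simp [this]

/-! ### Integration by parts -/

/-- Integration by parts for the weight `(t - r) e^{-λr}`, which vanishes at `r = t`. -/
lemma integral_weight_parts {X : Type*} [NormedAddCommGroup X] [NormedSpace ℂ X]
    [CompleteSpace X] {F : ℝ → X} (hF : Continuous F) (l : ℂ) (t : ℝ) :
    ∫ r in (0:ℝ)..t, (((t:ℂ) - r) * Complex.exp (-l * r)) • F r =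
      ∫ r in (0:ℝ)..t, (Complex.exp (-l * r) + l * (((t:ℂ) - r) * Complex.exp (-l * r))) •
        ∫ s in (0:ℝ)..r, F s := by
  have hw : ∀ r : ℝ, HasDerivAt (fun r : ℝ => ((t:ℂ) - r) * Complex.exp (-l * r))
      (-(Complex.exp (-l * r) + l * (((t:ℂ) - r) * Complex.exp (-l * r)))) r := by
    intro r
    have h1 : HasDerivAt (fun r : ℝ => (t:ℂ) - r) (-1) r :=
      (Complex.ofRealCLM.hasDerivAt (x := r)).const_sub (t:ℂ)
    have h2 : HasDerivAt (fun r : ℝ => Complex.exp (-l * r)) (Complex.exp (-l * r) * (-l * 1)) r :=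
      ((Complex.ofRealCLM.hasDerivAt (x := r)).const_mul (-l)).cexp
    exact (h1.mul h2).congr_deriv (by ring)
  have hV : ∀ r : ℝ, HasDerivAt (fun r : ℝ => ∫ s in (0:ℝ)..r, F s) (F r) r := fun r =>
    intervalIntegral.integral_hasDerivAt_right (hF.intervalIntegrable _ _)
      (hF.stronglyMeasurableAtFilter _ _) hF.continuousAt
  have hVc : Continuous (fun r : ℝ => ∫ s in (0:ℝ)..r, F s) :=
    continuous_iff_continuousAt.2 fun r => (hV r).continuousAt
  have key := intervalIntegral.integral_eq_sub_of_hasDerivAt (a := 0) (b := t)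
    (fun r _ => (hw r).smul (hV r)) (Continuous.intervalIntegrable (by fun_prop) _ _)
  rw [intervalIntegral.integral_add (Continuous.intervalIntegrable (by fun_prop) _ _)
    (Continuous.intervalIntegrable (by fun_prop) _ _)] at key
  simp only [Pi.smul_apply', neg_smul, intervalIntegral.integral_neg, sub_self, zero_mul, zero_smul,
    intervalIntegral.integral_same, smul_zero] at key
  exact eq_of_sub_eq_zero (by rw [← key]; abel)

/-- The scalar `φ_λ(t)` after integrating by parts, so that only the continuous function
`r ^ α / Γ(α + 1)` occurs, and not the possibly singular `r ^ (α - 1) / Γ(α)`. -/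
lemma phiConst_eq {α : ℝ} (hα : 0 < α) (l : ℂ) {t : ℝ} (ht : 0 ≤ t) :
    phiConst α l t = ∫ r in (0:ℝ)..t,
      (Complex.exp (-l * r) + l * (((t:ℂ) - r) * Complex.exp (-l * r))) *
        (((r ^ α : ℝ) : ℂ) / ((Real.Gamma (α + 1) : ℝ) : ℂ)) := by
  have hΓ : ((Real.Gamma α : ℝ) : ℂ) ≠ 0 := by exact_mod_cast (Real.Gamma_pos_of_pos hα).ne'
  have hα' : (α : ℂ) ≠ 0 := by exact_mod_cast hα.ne'
  have hg : Continuous fun r : ℝ => ((r ^ α : ℝ) : ℂ) / ((Real.Gamma (α + 1) : ℝ) : ℂ) :=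
    (Complex.continuous_ofReal.comp (Real.continuous_rpow_const hα.le)).div_const _
  have hFc : Continuous fun r : ℝ => Complex.exp (-l * r) *
      (((r ^ α : ℝ) : ℂ) / ((Real.Gamma (α + 1) : ℝ) : ℂ)) := by fun_prop
  have inner : ∀ τ : ℝ, 0 ≤ τ → (∫ r in (0:ℝ)..τ,
      Complex.exp (-l * ((r : ℝ) : ℂ)) * ((r ^ (α - 1) : ℝ) : ℂ) / ((Real.Gamma α : ℝ) : ℂ)) =
      Complex.exp (-l * τ) * (((τ ^ α : ℝ) : ℂ) / ((Real.Gamma (α + 1) : ℝ) : ℂ)) +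
        l * ∫ r in (0:ℝ)..τ, Complex.exp (-l * r) *
          (((r ^ α : ℝ) : ℂ) / ((Real.Gamma (α + 1) : ℝ) : ℂ)) := by
    intro τ hτ
    have hi1 : IntervalIntegrable (fun r : ℝ => Complex.exp (-l * ((r : ℝ) : ℂ)) *
        ((r ^ (α - 1) : ℝ) : ℂ) / ((Real.Gamma α : ℝ) : ℂ)) volume 0 τ := by
      have h0 : IntervalIntegrable (fun r : ℝ => ((r ^ (α - 1) : ℝ) : ℂ)) volume 0 τ :=
        
        have h := intervalIntegral.intervalIntegrable_rpow' (a := 0) (b := τ)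
          (by linarith : -1 < α - 1)
        ⟨h.1.ofReal, h.2.ofReal⟩
      exact (h0.continuousOn_mul (Continuous.continuousOn (by fun_prop))).div_const _
    have hi2 : IntervalIntegrable (fun r : ℝ => l * (Complex.exp (-l * r) *
          (((r ^ α : ℝ) : ℂ) / ((Real.Gamma (α + 1) : ℝ) : ℂ)))) volume 0 τ :=
      (continuous_const.mul hFc).intervalIntegrable _ _
    have key := intervalIntegral.integral_eq_sub_of_hasDerivAt_of_le hτ
      (f := fun r : ℝ => Complex.exp (-l * r) *
          (((r ^ α : ℝ) : ℂ) / ((Real.Gamma (α + 1) : ℝ) : ℂ)))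
      (f' := fun r : ℝ => Complex.exp (-l * ((r : ℝ) : ℂ)) *
        ((r ^ (α - 1) : ℝ) : ℂ) / ((Real.Gamma α : ℝ) : ℂ) - l * (Complex.exp (-l * r) *
          (((r ^ α : ℝ) : ℂ) / ((Real.Gamma (α + 1) : ℝ) : ℂ)))) hFc.continuousOn
      (fun r hr => by
        have h2 : HasDerivAt (fun r : ℝ => Complex.exp (-l * r))
            (Complex.exp (-l * r) * (-l * 1)) r :=
          ((Complex.ofRealCLM.hasDerivAt (x := r)).const_mul (-l)).cexp
        have h3 := ((Real.hasDerivAt_rpow_const (p := α) (Or.inl hr.1.ne')).ofReal_comp).div_const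
          ((Real.Gamma (α + 1) : ℝ) : ℂ)
        refine (h2.mul h3).congr_deriv ?_
        rw [Real.Gamma_add_one hα.ne']
        push_cast
        field_simp
        ring)
      (hi1.sub hi2)
    rw [intervalIntegral.integral_sub hi1 hi2, intervalIntegral.integral_const_mul] at key
    rw [sub_eq_iff_eq_add.1 key]
    simp [Real.zero_rpow hα.ne']
  have hVc : Continuous (fun τ : ℝ => ∫ r in (0:ℝ)..τ, Complex.exp (-l * r) *
          (((r ^ α : ℝ) : ℂ) / ((Real.Gamma (α + 1) : ℝ) : ℂ))) :=
    intervalIntegral.continuous_primitive (fun a b => hFc.intervalIntegrable a b) 0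
  -- The remaining double integral is the case `λ = 0` of the integration by parts formula.
  have parts := integral_weight_parts hFc 0 t
  simp only [neg_zero, zero_mul, Complex.exp_zero, mul_one, add_zero, one_mul,
    smul_eq_mul] at parts
  unfold phiConst
  rw [intervalIntegral.integral_congr (g := fun τ : ℝ => Complex.exp (-l * τ) *
      (((τ ^ α : ℝ) : ℂ) / ((Real.Gamma (α + 1) : ℝ) : ℂ)) +
        l * ∫ r in (0:ℝ)..τ, Complex.exp (-l * r) *
          (((r ^ α : ℝ) : ℂ) / ((Real.Gamma (α + 1) : ℝ) : ℂ)))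
      (fun τ hτ => inner τ (by rw [Set.uIcc_of_le ht] at hτ; exact hτ.1)),
    intervalIntegral.integral_add (hFc.intervalIntegrable _ _)
      (Continuous.intervalIntegrable (by fun_prop) _ _),
    intervalIntegral.integral_const_mul, ← parts, ← intervalIntegral.integral_const_mul,
    ← intervalIntegral.integral_add (hFc.intervalIntegrable _ _)
      (Continuous.intervalIntegrable (by fun_prop) _ _)]
  apply intervalIntegral.integral_congr
  intro r _
  simp only
  ring

/-! ### Closedness of the generator and the basic identity -/

/-- Integration commutes with `A`: an operator with a bounded resolvent `R = (μ - A)⁻¹` is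
closed, the relation `y = A x` being equivalent to `x = R (μ x - y)`. -/
lemma integral_mem_domain {X : Type*} [NormedAddCommGroup X] [NormedSpace ℂ X] [CompleteSpace X]
    {D : Submodule ℂ X} {A : X →ₗ[ℂ] X} {μ : ℂ} {R : X →L[ℂ] X} (hR1 : ∀ x : X, R x ∈ D)
    (hR2 : ∀ x : X, μ • R x - A (R x) = x) (hR3 : ∀ x ∈ D, R (μ • x - A x) = x)
    {f g : ℝ → X} {t : ℝ} (hf : IntervalIntegrable f volume 0 t)
    (hg : IntervalIntegrable g volume 0 t)
    (h : ∀ r ∈ Set.uIcc 0 t, f r ∈ D ∧ A (f r) = g r) :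
    (∫ r in (0:ℝ)..t, f r) ∈ D ∧ A (∫ r in (0:ℝ)..t, f r) = ∫ r in (0:ℝ)..t, g r := by
  have hμ : IntervalIntegrable (fun r => μ • f r) volume 0 t := hf.smul μ
  have e : R (μ • (∫ r in (0:ℝ)..t, f r) - ∫ r in (0:ℝ)..t, g r) = ∫ r in (0:ℝ)..t, f r := by
    rw [← intervalIntegral.integral_smul, ← intervalIntegral.integral_sub hμ hg,
      ← ContinuousLinearMap.intervalIntegral_comp_comm R (hμ.sub hg)]
    apply intervalIntegral.integral_congr
    intro r hr
    have := hR3 _ (h r hr).1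
    rw [(h r hr).2] at this
    exact this
  have e2 := hR2 (μ • (∫ r in (0:ℝ)..t, f r) - ∫ r in (0:ℝ)..t, g r)
  rw [e] at e2
  refine ⟨e ▸ hR1 _, ?_⟩
  exact sub_right_injective e2

/-- An operator commuting with the resolvent of `A` commutes with `A` on its domain. -/
lemma apply_comm_of_commute {X : Type*} [NormedAddCommGroup X] [NormedSpace ℂ X]
    {D : Submodule ℂ X} {A : X →ₗ[ℂ] X} {μ : ℂ} {R : X →L[ℂ] X}
    (hR2 : ∀ x : X, μ • R x - A (R x) = x) (hR3 : ∀ x ∈ D, R (μ • x - A x) = x)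
    {T : X →L[ℂ] X} (hT : Commute T R) {x : X} (hx : x ∈ D) : A (T x) = T (A x) := by
  have h1 : R (T (μ • x - A x)) = T x := by
    have : T (R (μ • x - A x)) = R (T (μ • x - A x)) := DFunLike.congr_fun hT (μ • x - A x)
    rw [← this, hR3 x hx]
  have h2 := hR2 (T (μ • x - A x))
  rw [h1, map_sub, map_smul] at h2
  exact sub_right_injective h2

/-- The basic identity `(λ - A) L + e^{-λt} D_λ(t) = φ_λ(t)`, for
`L x = ∫₀ᵗ (t - r) e^{-λr} S(r) x dr`, which is `L_λ(t) x` with the order of integration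
exchanged. -/
lemma resolvent_identity {X : Type*} [NormedAddCommGroup X] [NormedSpace ℂ X] [CompleteSpace X]
    {α : ℝ} (hα : 0 < α) {D : Submodule ℂ X} {A : X →ₗ[ℂ] X} {S : ℝ → X →L[ℂ] X}
    (hcont : ∀ x : X, ContinuousOn (fun u : ℝ => S u x) (Set.Ici (0:ℝ)))
    {μ : ℂ} {R : X →L[ℂ] X} (hR1 : ∀ x : X, R x ∈ D)
    (hR2 : ∀ x : X, μ • R x - A (R x) = x) (hR3 : ∀ x ∈ D, R (μ • x - A x) = x)
    (hint : ∀ u : ℝ, 0 ≤ u → ∀ x : X, (∫ s in (0:ℝ)..u, S s x) ∈ D ∧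
      A (∫ s in (0:ℝ)..u, S s x) =
        S u x - (((u ^ α : ℝ) : ℂ) / ((Real.Gamma (α + 1) : ℝ) : ℂ)) • x)
    (l : ℂ) {t : ℝ} (ht : 0 ≤ t) {Lc : X →L[ℂ] X}
    (hL : ∀ x, Lc x = ∫ r in (0:ℝ)..t, (((t:ℂ) - r) * Complex.exp (-l * r)) • S r x) (x : X) :
    Lc x ∈ D ∧ l • Lc x - A (Lc x) =
      phiConst α l t • x - Complex.exp (-l * t) • Dop S l t x := by
  have hF := continuous_apply_max hcont x
  have hg : Continuous fun r : ℝ => ((r ^ α : ℝ) : ℂ) / ((Real.Gamma (α + 1) : ℝ) : ℂ) :=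
    (Complex.continuous_ofReal.comp (Real.continuous_rpow_const hα.le)).div_const _
  have hVc : Continuous (fun r : ℝ => ∫ s in (0:ℝ)..r, S (max s 0) x) :=
    intervalIntegral.continuous_primitive (fun a b => hF.intervalIntegrable a b) 0
  have hL' : Lc x = ∫ r in (0:ℝ)..t,
      (Complex.exp (-l * r) + l * (((t:ℂ) - r) * Complex.exp (-l * r))) •
        ∫ s in (0:ℝ)..r, S (max s 0) x := by
    rw [hL, integral_congr_max S (fun r : ℝ => ((t:ℂ) - r) * Complex.exp (-l * r)) ht,
      integral_weight_parts hF]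
  obtain ⟨hm, hA⟩ := integral_mem_domain hR1 hR2 hR3 (t := t)
    (f := fun r : ℝ => (Complex.exp (-l * r) + l * (((t:ℂ) - r) * Complex.exp (-l * r))) •
        ∫ s in (0:ℝ)..r, S (max s 0) x)
    (g := fun r : ℝ => (Complex.exp (-l * r) + l * (((t:ℂ) - r) * Complex.exp (-l * r))) •
        (S (max r 0) x - (((r ^ α : ℝ) : ℂ) / ((Real.Gamma (α + 1) : ℝ) : ℂ)) • x))
    (Continuous.intervalIntegrable (by fun_prop) _ _)
    (Continuous.intervalIntegrable
      (Continuous.smul (by fun_prop) (hF.sub (hg.smul continuous_const))) _ _)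
    (fun r hr => by
      rw [Set.uIcc_of_le ht] at hr
      have e : ∫ s in (0:ℝ)..r, S (max s 0) x = ∫ s in (0:ℝ)..r, S s x := by
        simpa using (integral_congr_max S (fun _ => 1) hr.1 x).symm
      obtain ⟨h1, h2⟩ := hint r hr.1 x
      simp only [e, map_smul, h2, max_eq_left hr.1]
      exact ⟨D.smul_mem _ h1, trivial⟩)
  rw [← hL'] at hm hA
  refine ⟨hm, ?_⟩
  have hD : Complex.exp (-l * t) • Dop S l t x =
      ∫ r in (0:ℝ)..t, Complex.exp (-l * r) • S (max r 0) x := by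
    rw [← integral_congr_max S (fun r : ℝ => Complex.exp (-l * r)) ht, Dop,
      ← intervalIntegral.integral_smul]
    congr 1
    ext r
    rw [smul_smul, ← Complex.exp_add]
    congr 2
    push_cast
    ring
  have hLm : l • Lc x =
      ∫ r in (0:ℝ)..t, (l * (((t:ℂ) - r) * Complex.exp (-l * r))) • S (max r 0) x := by
    rw [hL, integral_congr_max S (fun r : ℝ => ((t:ℂ) - r) * Complex.exp (-l * r)) ht,
      ← intervalIntegral.integral_smul]
    simp only [smul_smul]
  have hφ : phiConst α l t • x = ∫ r in (0:ℝ)..t,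
      ((Complex.exp (-l * r) + l * (((t:ℂ) - r) * Complex.exp (-l * r))) *
        (((r ^ α : ℝ) : ℂ) / ((Real.Gamma (α + 1) : ℝ) : ℂ))) • x := by
    rw [phiConst_eq hα l ht, intervalIntegral.integral_smul_const]
  rw [hA, hD, hLm, hφ, ← intervalIntegral.integral_sub, ← intervalIntegral.integral_sub]
  · apply intervalIntegral.integral_congr
    intro r _
    simp only
    module
  all_goals
    refine Continuous.intervalIntegrable ?_ _ _
    first
      | fun_prop
      | exact Continuous.smul (by fun_prop) hF
      | exact Continuous.smul (by fun_prop) (hF.sub (hg.smul continuous_const))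

/-! ### Powers -/

/-- If `f ∘ L = B` and `L` commutes with `B`, then `f ^ n ∘ L ^ n = B ^ n`. -/
lemma iterate_pow {X : Type*} [NormedAddCommGroup X] [NormedSpace ℂ X]
    {D : Set X} {f : X → X} {L B : X →L[ℂ] X} (hc : Commute L B)
    (h : ∀ x, L x ∈ D ∧ f (L x) = B x) (n : ℕ) (y : X) :
    (L ^ n) y ∈ iterDom D f n ∧ f^[n] ((L ^ n) y) = (B ^ n) y := by
  induction n generalizing y with
  | zero => simp [iterDom]
  | succ n ih =>
    have e : f ((L ^ (n + 1)) y) = (L ^ n) (B y) := by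
      rw [pow_succ', mul_apply_eq_comp, (h _).2]
      exact (DFunLike.congr_fun (hc.pow_left n) y).symm
    refine ⟨⟨?_, ?_⟩, ?_⟩
    · rw [pow_succ', mul_apply_eq_comp]
      exact (h _).1
    · rw [e]
      exact (ih _).1
    · rw [Function.iterate_succ_apply, e, (ih _).2, pow_succ, mul_apply_eq_comp]

/-- Binomial expansion of `(p - e^{-ls} d)ⁿ`, with the factor `d` split off from all terms
but the first. -/
lemma binomial_split {𝔸 : Type*} [Ring 𝔸] [Algebra ℂ 𝔸] (d : 𝔸) (p l s : ℂ) (n : ℕ) :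
    (p • (1 : 𝔸) - Complex.exp (-l * s) • d) ^ n = (p ^ n) • (1 : 𝔸) -
      d * ∑ i ∈ Finset.Icc 1 n,
        ((n.choose i : ℂ) * p ^ (n - i) * Complex.exp (-(i : ℂ) * l * s)) • (-d) ^ (i - 1) := by
  have hc : Commute (Complex.exp (-l * s) • (-d)) (p • (1 : 𝔸)) :=
    (Commute.one_right _).smul_right p
  have e : p • (1 : 𝔸) - Complex.exp (-l * s) • d =
      Complex.exp (-l * s) • (-d) + p • (1 : 𝔸) := by
    rw [smul_neg]; abel
  rw [e, hc.add_pow, Finset.sum_range_succ', sub_eq_add_neg, ← neg_mul, add_comm,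
    Finset.mul_sum, ← Finset.Ico_succ_right_eq_Icc, Finset.sum_Ico_eq_sum_range]
  congr 1
  · simp [smul_pow]
  · apply Finset.sum_congr (by simp)
    intro i _
    have he : Complex.exp (-((1 + i : ℕ) : ℂ) * l * s) = Complex.exp (-l * s) ^ (i + 1) := by
      rw [← Complex.exp_nat_mul]
      congr 1
      push_cast
      ring
    rw [he, Nat.add_sub_cancel_left, add_comm 1 i, mul_smul_comm, ← pow_succ', smul_pow, smul_pow,
      one_pow, smul_mul_smul_comm, mul_one, ← Nat.cast_comm, ← nsmul_eq_mul,
      ← Nat.cast_smul_eq_nsmul ℂ, smul_smul]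
    congr 1
    ring

theorem stmt_5
    {X : Type*} [NormedAddCommGroup X] [NormedSpace ℂ X] [CompleteSpace X]
    (α : ℝ) (hα : 0 < α)
    (D : Submodule ℂ X) (A : X →ₗ[ℂ] X)
    (S : ℝ → X →L[ℂ] X)
    (hcont : ∀ x : X, ContinuousOn (fun u : ℝ => S u x) (Set.Ici (0:ℝ)))
    (hcomm : ∀ u v : ℝ, 0 ≤ u → 0 ≤ v → ∀ x : X, S u (S v x) = S v (S u x))
    (hres : ∃ μ : ℂ, ∃ R : X →L[ℂ] X, (∀ x : X, R x ∈ D) ∧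
      (∀ x : X, μ • R x - A (R x) = x) ∧ (∀ x ∈ D, R (μ • x - A x) = x))
    (hdom : ∀ u : ℝ, 0 ≤ u → ∀ x ∈ D, S u x ∈ D ∧ A (S u x) = S u (A x) ∧
      S u x = (((u ^ α : ℝ) : ℂ) / ((Real.Gamma (α + 1) : ℝ) : ℂ)) • x +
        ∫ s in (0:ℝ)..u, S s (A x))
    (hint : ∀ u : ℝ, 0 ≤ u → ∀ x : X, (∫ s in (0:ℝ)..u, S s x) ∈ D ∧
      A (∫ s in (0:ℝ)..u, S s x) =
        S u x - (((u ^ α : ℝ) : ℂ) / ((Real.Gamma (α + 1) : ℝ) : ℂ)) • x)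
    (l : ℂ) (t : ℝ)
    (ht : 0 ≤ t) (n : ℕ) (hn : 1 ≤ n) :
    ∃ K : X →L[ℂ] X,
      (∀ x : X, K x ∈ iterDom (D : Set X) (fun y => l • y - A y) n ∧
        (fun y => l • y - A y)^[n] (K x) + (Dop S l t)^[n] ((Dln S α l t n)^[n] x) =
          (phiConst α l t) ^ (n * n) • x) ∧
      (∀ x : X, K (Dop S l t x) = Dop S l t (K x)) ∧
      (∀ x : X, K (Dln S α l t n x) = Dln S α l t n (K x)) ∧
      (∀ x ∈ D, l • K x - A (K x) = K (l • x - A x)) := by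
  obtain ⟨μ, R, hR1, hR2, hR3⟩ := hres
  have hw1 : Continuous fun r : ℝ => ((t:ℂ) - r) * Complex.exp (-l * r) := by fun_prop
  have hw2 : Continuous fun r : ℝ => Complex.exp (l * ((t - r : ℝ) : ℂ)) := by fun_prop
  obtain ⟨Lc, hL⟩ := exists_weighted hcont hw1 ht
  obtain ⟨Dc, hD⟩ := exists_weighted hcont hw2 ht
  have hDop : Dop S l t = ⇑Dc := funext fun x => (hD x).symm
  -- All operators involved commute, since they are weighted integrals of `S`.
  have hSS : ∀ u v : ℝ, 0 ≤ u → 0 ≤ v → Commute (S u) (S v) := fun u v hu hv =>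
    ContinuousLinearMap.ext (hcomm u v hu hv)
  have hDL : Commute Dc Lc := commute_weighted hcont hw1 ht hL fun u hu =>
    (commute_weighted hcont hw2 ht hD fun v hv => hSS u v hu hv).symm
  have hRS : ∀ u : ℝ, 0 ≤ u → Commute R (S u) := fun u hu => by
    ext y
    change R (S u y) = S u (R y)
    obtain ⟨h1, h2, -⟩ := hdom u hu _ (hR1 y)
    have := hR3 _ h1
    rwa [h2, ← map_smul, ← map_sub, hR2] at this
  have hRL : Commute R Lc := commute_weighted hcont hw1 ht hL hRS
  have hRD : Commute R Dc := commute_weighted hcont hw2 ht hD hRS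
  set p := phiConst α l t with hp
  let Dn : X →L[ℂ] X := ∑ i ∈ Finset.Icc 1 n,
    ((n.choose i : ℂ) * p ^ (n - i) * Complex.exp (-(i : ℂ) * l * (t : ℂ))) • (-Dc) ^ (i - 1)
  have hneg : (fun y => - Dop S l t y) = ⇑(-Dc) := by
    rw [hDop]; rfl
  have hDln : Dln S α l t n = ⇑Dn := by
    funext x
    simp only [Dln, Dn, hneg, sum_apply, smul_apply,
      FunLike.coe_pow_eq_iterate, ← hp]
  have hDnc : ∀ T : X →L[ℂ] X, Commute T Dc → Commute T Dn := fun T hT =>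
    Commute.sum_right _ _ _ fun i _ => ((hT.neg_right).pow_right _).smul_right _
  let a : X →L[ℂ] X := (p ^ n) • 1
  let b : X →L[ℂ] X := Dc * Dn
  let B : X →L[ℂ] X := p • 1 - Complex.exp (-l * t) • Dc
  have hB : B ^ n = a - b := binomial_split Dc p l t n
  have hac : ∀ T : X →L[ℂ] X, Commute T a := fun T => (Commute.one_right T).smul_right _
  let P : X →L[ℂ] X := ∑ i ∈ Finset.range n, a ^ i * b ^ (n - 1 - i)
  have hPc : ∀ T : X →L[ℂ] X, Commute T Dc → Commute T P := fun T hT =>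
    Commute.sum_right _ _ _ fun i _ =>
      ((hac T).pow_right i).mul_right ((hT.mul_right (hDnc T hT)).pow_right _)
  -- `B ^ n * P = (a - b) * P = a ^ n - b ^ n` by the geometric sum.
  have hBP : B ^ n * P = a ^ n - b ^ n := by
    rw [hB]
    exact (hac b).symm.mul_geom_sum₂ n
  have hLB : Commute Lc B :=
    ((Commute.one_right Lc).smul_right p).sub_right (hDL.symm.smul_right _)
  have hid := iterate_pow (D := (D : Set X)) (f := fun y => l • y - A y) hLB (fun x => by
    have := resolvent_identity hα hcont hR1 hR2 hR3 hint l ht hL x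
    rw [hDop] at this
    exact this) n
  have hKc : ∀ T : X →L[ℂ] X, Commute T Lc → Commute T Dc → Commute T (Lc ^ n * P) :=
    fun T h1 h2 => (h1.pow_right n).mul_right (hPc T h2)
  have hDcK := hKc Dc hDL (Commute.refl Dc)
  have hDnK := hKc Dn (hDnc Lc hDL.symm).symm (hDnc Dc (Commute.refl Dc)).symm
  refine ⟨Lc ^ n * P, fun x => ⟨(hid (P x)).1, ?_⟩, fun x => ?_, fun x => ?_, fun x hx => ?_⟩
  · have h1 : (B ^ n) (P x) = (a ^ n - b ^ n) x := by
      rw [← hBP]; rfl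
    have h2 : a ^ n = (p ^ (n * n)) • (1 : X →L[ℂ] X) := by
      simp only [a, smul_pow, one_pow, pow_mul]
    have h3 : b ^ n = Dc ^ n * Dn ^ n := (hDnc Dc (Commute.refl Dc)).mul_pow n
    have h4 : (Dop S l t)^[n] ((Dln S α l t n)^[n] x) = (b ^ n) x := by
      rw [hDop, hDln, h3, ← FunLike.coe_pow_eq_iterate, ← FunLike.coe_pow_eq_iterate]
      rfl
    rw [h4]
    change (fun y => l • y - A y)^[n] ((Lc ^ n) (P x)) + (b ^ n) x = _
    rw [(hid (P x)).2, h1, h2]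
    simp
  · rw [hDop]
    exact (DFunLike.congr_fun hDcK x).symm
  · rw [hDln]
    exact (DFunLike.congr_fun hDnK x).symm
  · rw [apply_comm_of_commute hR2 hR3 (hKc R hRL hRD).symm hx, map_sub, map_smul]
end
end

section
/- Let λ ∈ ℂ and t > 0 with φ_λ(t) ≠ 0. If the bounded operator c_λ(t)·I − S(t) is relatively regular (i.e. there is a bounded operator T on X with (c_λ(t)·I − S(t))T(c_λ(t)·I − S(t)) = c_λ(t)·I − S(t)), then λ − A is relatively regular: there exists a bounded linear operator B on X mapping X into D(A) such that (λ − A)B(λ − A)x = (λ − A)x for all x ∈ D(A). -/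
/-!
Write `N = λ − A`, `G(s)x = ∫₀ˢ e^{−λr} S(r)x dr` and `k(s) = ∫₀ˢ e^{−λr} r^{α−1}/Γ(α) dr`, so that
`G(s) = e^{−λs} D_λ(s)` and `k(s) = e^{−λs} c_λ(s)`. Put `M = k(t) − e^{−λt} S(t)`, a nonzero multiple
of `c_λ(t) − S(t)`, and `L = ∫₀ᵗ G(s) ds`.

Integrating the derivative of `e^{−λr} S(r)z` gives `G(s) N z = k(s) z − e^{−λs} S(s) z` for `z ∈ D(A)`
(`G_apply_sub`), and a second integration gives `L N z = φ_λ(t) z − G(t) z`. Since all these operators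
commute with a resolvent of `A`, both identities also hold with `N` on the left, on all of `X`
(`mem_and_sub_of_comm`). Hence `N G(t) = M` and `N L = φ_λ(t) − G(t)` everywhere, and `G(t) N = M` on `D(A)`.

If `M T M = M`, then for `x ∈ D(A)`
`N G(t) T G(t) N x = M T M x = M x = G(t) N x`, so that `N (L + G(t) T G(t)) N x = φ_λ(t) N x`, and
`B = φ_λ(t)⁻¹ (L + G(t) T G(t))` is the required generalized inverse.
-/

open MeasureTheory intervalIntegral Pointwise

noncomputable section

/-- The strong integral of a strongly continuous operator family is a bounded operator; the bound
comes from the uniform boundedness principle. -/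
theorem exists_clm_integral {X : Type*} [NormedAddCommGroup X] [NormedSpace ℂ X] [CompleteSpace X]
    (t : ℝ) (ht : 0 ≤ t) (K : ℝ → X →L[ℂ] X)
    (hK : ∀ x : X, ContinuousOn (fun r => K r x) (Set.Icc 0 t)) :
    ∃ P : X →L[ℂ] X, ∀ x, P x = ∫ r in (0:ℝ)..t, K r x := by
  have hI : ∀ x, IntervalIntegrable (fun r => K r x) volume 0 t := fun x =>
    ContinuousOn.intervalIntegrable (by rw [Set.uIcc_of_le ht]; exact hK x)
  obtain ⟨C, hC⟩ := banach_steinhaus (g := fun i : Set.Icc (0:ℝ) t => K i) (fun x => by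
    obtain ⟨C, hC⟩ := isCompact_Icc.exists_bound_of_continuousOn (hK x)
    exact ⟨C, fun i => hC i i.2⟩)
  refine ⟨LinearMap.mkContinuous
    { toFun := fun x => ∫ r in (0:ℝ)..t, K r x
      map_add' := fun x y => by
        simp only [map_add]
        exact intervalIntegral.integral_add (hI x) (hI y)
      map_smul' := fun c x => by
        simp only [map_smul, RingHom.id_apply]
        exact intervalIntegral.integral_smul c _ } (C * |t - 0|) (fun x => ?_), fun x => rfl⟩
  have h := intervalIntegral.norm_integral_le_of_norm_le_const (a := 0) (b := t) (C := C * ‖x‖)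
    (f := fun r => K r x) (fun r hr => by
      rw [Set.uIoc_of_le ht] at hr
      exact (K r).le_of_opNorm_le (hC ⟨r, hr.1.le, hr.2⟩) x)
  calc _ ≤ C * ‖x‖ * |t - 0| := h
    _ = _ := by ring

/-- If bounded `P`, `Q` commute with a resolvent `R = (μ − A)⁻¹` and `P (l − A) = Q` on `D(A)`, then
`P` maps into `D(A)` and `(l − A) P = Q` on the whole space. -/
theorem mem_and_sub_of_comm {X : Type*} [NormedAddCommGroup X] [NormedSpace ℂ X]
    (D : Submodule ℂ X) (A : X →ₗ[ℂ] X) (μ : ℂ) (R : X →L[ℂ] X) (hR : ∀ x : X, R x ∈ D)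
    (hR1 : ∀ x : X, μ • R x - A (R x) = x) (l : ℂ) (P Q : X →L[ℂ] X)
    (hP : ∀ x, P (R x) = R (P x)) (hQ : ∀ x, Q (R x) = R (Q x))
    (h : ∀ z ∈ D, P (l • z - A z) = Q z) (x : X) :
    P x ∈ D ∧ l • P x - A (P x) = Q x := by
  have h1 : P x = R (Q x + (μ - l) • P x) := by
    have h2 := h (R x) (hR x)
    have h3 : l • R x - A (R x) = (l - μ) • R x + x := by
      nth_rewrite 4 [← hR1 x]
      module
    rw [h3, map_add, map_smul, hP, hQ] at h2
    rw [map_add, map_smul, ← h2]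
    module
  have h4 := hR1 (Q x + (μ - l) • P x)
  rw [← h1] at h4
  refine ⟨h1 ▸ hR _, ?_⟩
  calc l • P x - A (P x) = (μ • P x - A (P x)) - (μ - l) • P x := by module
    _ = Q x := by rw [h4]; module

theorem intervalIntegrable_weight (α : ℝ) (hα : 0 < α) (l : ℂ) (a b : ℝ) :
    IntervalIntegrable (fun r : ℝ => Complex.exp (-l * ((r : ℝ) : ℂ)) * ((r ^ (α - 1) : ℝ) : ℂ) /
      ((Real.Gamma α : ℝ) : ℂ)) volume a b := by
  have h0 : IntervalIntegrable (fun r : ℝ => r ^ (α - 1)) volume a b :=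
    intervalIntegral.intervalIntegrable_rpow' (by linarith)
  have h : IntervalIntegrable (fun r : ℝ => ((r ^ (α - 1) : ℝ) : ℂ)) volume a b :=
    ⟨h0.1.ofReal, h0.2.ofReal⟩
  exact (h.continuousOn_mul (by fun_prop)).div_const _

/-- `G(s)(λ − A)z = k(s) z − e^{−λs} S(s) z` on `D(A)`: the fundamental theorem of calculus for
`r ↦ e^{−λr} S(r)z`, which is differentiable on the open interval because
`S(r)z = (r^α/Γ(α+1)) z + ∫₀ʳ S(s)Az ds`. -/
theorem G_apply_sub {X : Type*} [NormedAddCommGroup X] [NormedSpace ℂ X] [CompleteSpace X]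
    (α : ℝ) (hα : 0 < α) (S : ℝ → X →L[ℂ] X)
    (hcont : ∀ x : X, ContinuousOn (fun u : ℝ => S u x) (Set.Ici (0:ℝ)))
    (z w : X)
    (hS : ∀ u : ℝ, 0 ≤ u →
      S u z = (((u ^ α : ℝ) : ℂ) / ((Real.Gamma (α + 1) : ℝ) : ℂ)) • z +
        ∫ s in (0:ℝ)..u, S s w)
    (l : ℂ) (t : ℝ) (ht : 0 ≤ t) :
    ∫ r in (0:ℝ)..t, Complex.exp (-l * ((r : ℝ) : ℂ)) • S r (l • z - w) =
      (∫ r in (0:ℝ)..t, Complex.exp (-l * ((r : ℝ) : ℂ)) * ((r ^ (α - 1) : ℝ) : ℂ) /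
        ((Real.Gamma α : ℝ) : ℂ)) • z - Complex.exp (-l * ((t : ℝ) : ℂ)) • S t z := by
  have hc : ∀ x, ContinuousOn (fun r : ℝ => Complex.exp (-l * ((r : ℝ) : ℂ)) • S r x)
      (Set.Icc 0 t) := fun x =>
    ContinuousOn.smul (by fun_prop) ((hcont x).mono Set.Icc_subset_Ici_self)
  have hI1 : IntervalIntegrable (fun r : ℝ => Complex.exp (-l * ((r : ℝ) : ℂ)) • S r (l • z - w))
      volume 0 t := ContinuousOn.intervalIntegrable (by rw [Set.uIcc_of_le ht]; exact hc _)
  have hI2 : IntervalIntegrable (fun r : ℝ => (Complex.exp (-l * ((r : ℝ) : ℂ)) *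
      ((r ^ (α - 1) : ℝ) : ℂ) / ((Real.Gamma α : ℝ) : ℂ)) • z) volume 0 t :=
    (intervalIntegrable_weight α hα l 0 t).smul_continuousOn (by fun_prop)
  have key := intervalIntegral.integral_eq_sub_of_hasDerivAt_of_le ht (hc z)
    (f' := fun r : ℝ => (Complex.exp (-l * ((r : ℝ) : ℂ)) *
      ((r ^ (α - 1) : ℝ) : ℂ) / ((Real.Gamma α : ℝ) : ℂ)) • z -
        Complex.exp (-l * ((r : ℝ) : ℂ)) • S r (l • z - w)) (fun r hr => ?_) (hI2.sub hI1)
  · rw [intervalIntegral.integral_sub hI2 hI1, intervalIntegral.integral_smul_const] at key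
    have hS0 : S 0 z = 0 := by
      rw [hS 0 le_rfl, Real.zero_rpow hα.ne']
      simp
    rw [hS0, smul_zero, sub_zero] at key
    rw [← key]
    abel
  · have hr0 : 0 < r := hr.1
    have hg : HasDerivAt (fun u : ℝ => (((u ^ α : ℝ) : ℂ) / ((Real.Gamma (α + 1) : ℝ) : ℂ)) • z)
        ((((r ^ (α - 1) : ℝ) : ℂ) / ((Real.Gamma α : ℝ) : ℂ)) • z) r := by
      have h1 := (((Real.hasDerivAt_rpow_const (p := α) (Or.inl hr0.ne')).ofReal_comp).div_const
        ((Real.Gamma (α + 1) : ℝ) : ℂ)).smul_const z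
      convert h1 using 2
      rw [Real.Gamma_add_one hα.ne']
      have : (α : ℂ) ≠ 0 := by exact_mod_cast hα.ne'
      have : ((Real.Gamma α : ℝ) : ℂ) ≠ 0 := by exact_mod_cast (Real.Gamma_pos_of_pos hα).ne'
      push_cast
      field_simp
    have hF : HasDerivAt (fun u : ℝ => ∫ s in (0:ℝ)..u, S s w) (S r w) r := by
      refine intervalIntegral.integral_hasDerivAt_right ?_ ?_ ?_
      · refine ContinuousOn.intervalIntegrable ?_
        rw [Set.uIcc_of_le hr0.le]
        exact (hcont w).mono Set.Icc_subset_Ici_self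
      · exact ContinuousOn.stronglyMeasurableAtFilter isOpen_Ioi
          ((hcont w).mono Set.Ioi_subset_Ici_self) r hr0
      · exact (hcont w).continuousAt (Ici_mem_nhds hr0)
    have hSd : HasDerivAt (fun u : ℝ => S u z)
        ((((r ^ (α - 1) : ℝ) : ℂ) / ((Real.Gamma α : ℝ) : ℂ)) • z + S r w) r := by
      refine (hg.add hF).congr_of_eventuallyEq ?_
      filter_upwards [Ici_mem_nhds hr0] with u hu using hS u hu
    have hE : HasDerivAt (fun u : ℝ => Complex.exp (-l * ((u : ℝ) : ℂ)))
        (Complex.exp (-l * ((r : ℝ) : ℂ)) * (-l)) r := by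
      have h1 : HasDerivAt (fun u : ℝ => ((u : ℝ) : ℂ)) 1 r := Complex.ofRealCLM.hasDerivAt
      simpa using (h1.const_mul (-l)).cexp
    refine (hE.smul hSd).congr_deriv ?_
    rw [map_sub, map_smul]
    module

theorem stmt_7
    {X : Type*} [NormedAddCommGroup X] [NormedSpace ℂ X] [CompleteSpace X]
    (α : ℝ) (hα : 0 < α)
    (D : Submodule ℂ X) (A : X →ₗ[ℂ] X)
    (S : ℝ → X →L[ℂ] X)
    (hcont : ∀ x : X, ContinuousOn (fun u : ℝ => S u x) (Set.Ici (0:ℝ)))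
    (hcomm : ∀ u v : ℝ, 0 ≤ u → 0 ≤ v → ∀ x : X, S u (S v x) = S v (S u x))
    (hres : ∃ μ : ℂ, ∃ R : X →L[ℂ] X, (∀ x : X, R x ∈ D) ∧
      (∀ x : X, μ • R x - A (R x) = x) ∧ (∀ x ∈ D, R (μ • x - A x) = x))
    (hdom : ∀ u : ℝ, 0 ≤ u → ∀ x ∈ D, S u x ∈ D ∧ A (S u x) = S u (A x) ∧
      S u x = (((u ^ α : ℝ) : ℂ) / ((Real.Gamma (α + 1) : ℝ) : ℂ)) • x +
        ∫ s in (0:ℝ)..u, S s (A x))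
    (hint : ∀ u : ℝ, 0 ≤ u → ∀ x : X, (∫ s in (0:ℝ)..u, S s x) ∈ D ∧
      A (∫ s in (0:ℝ)..u, S s x) =
        S u x - (((u ^ α : ℝ) : ℂ) / ((Real.Gamma (α + 1) : ℝ) : ℂ)) • x)
    (l : ℂ) (t : ℝ)
    (ht : 0 < t) (hphi : phiConst α l t ≠ 0)
    (hreg : ∃ T : X →L[ℂ] X,
      (cSop S α l t).comp (T.comp (cSop S α l t)) = cSop S α l t) :
    ∃ B : X →L[ℂ] X, (∀ x : X, B x ∈ D) ∧
      ∀ x ∈ D, l • B (l • x - A x) - A (B (l • x - A x)) = l • x - A x := by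
  obtain ⟨μ, R, hR, hR1, hR2⟩ := hres
  obtain ⟨T, hT⟩ := hreg
  have hSR : ∀ u : ℝ, 0 ≤ u → ∀ x, S u (R x) = R (S u x) := by
    intro u hu x
    obtain ⟨h1, h2, -⟩ := hdom u hu (R x) (hR x)
    have h3 := hR2 _ h1
    rw [h2, ← map_smul, ← map_sub, hR1] at h3
    exact h3.symm
  let e : ℝ → ℂ := fun r => Complex.exp (-l * ((r : ℝ) : ℂ))
  have he : Continuous e := by fun_prop
  let k : ℝ → ℂ := fun s => ∫ r in (0:ℝ)..s,
    Complex.exp (-l * ((r : ℝ) : ℂ)) * ((r ^ (α - 1) : ℝ) : ℂ) / ((Real.Gamma α : ℝ) : ℂ)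
  have hc : ∀ (s : ℝ) (x : X), ContinuousOn (fun r : ℝ => (e r • S r) x) (Set.Icc 0 s) :=
    fun s x => ContinuousOn.smul he.continuousOn ((hcont x).mono Set.Icc_subset_Ici_self)
  have hci : ∀ (s : ℝ), 0 ≤ s → ∀ x : X,
      IntervalIntegrable (fun r : ℝ => (e r • S r) x) volume 0 s := fun s hs x =>
    ContinuousOn.intervalIntegrable (by rw [Set.uIcc_of_le hs]; exact hc s x)
  have hGex : ∀ s : ℝ, ∃ P : X →L[ℂ] X, 0 ≤ s → ∀ x, P x = ∫ r in (0:ℝ)..s, (e r • S r) x := by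
    intro s
    by_cases hs : 0 ≤ s
    · obtain ⟨P, hP⟩ := exists_clm_integral s hs (fun r => e r • S r) (hc s)
      exact ⟨P, fun _ => hP⟩
    · exact ⟨0, fun h => absurd h hs⟩
  choose G hG using hGex
  have hGR : ∀ s : ℝ, 0 ≤ s → ∀ x, G s (R x) = R (G s x) := by
    intro s hs x
    rw [hG s hs, hG s hs, ← R.intervalIntegral_comp_comm (hci s hs x)]
    refine intervalIntegral.integral_congr fun r hr => ?_
    rw [Set.uIcc_of_le hs] at hr
    simp [hSR r hr.1]
  have hGN : ∀ s : ℝ, 0 ≤ s → ∀ z ∈ D, G s (l • z - A z) = k s • z - e s • S s z := by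
    intro s hs z hz
    rw [hG s hs]
    exact G_apply_sub α hα S hcont z (A z) (fun u hu => (hdom u hu z hz).2.2) l s hs
  have hGc : ∀ x, ContinuousOn (fun s => G s x) (Set.Icc 0 t) := by
    intro x
    have h := intervalIntegral.continuousOn_primitive_interval' (hci t ht.le x)
      (a := 0) Set.left_mem_uIcc
    rw [Set.uIcc_of_le ht.le] at h
    exact h.congr fun s hs => hG s hs.1 x
  have hGi : ∀ x, IntervalIntegrable (fun s => G s x) volume 0 t := fun x =>
    ContinuousOn.intervalIntegrable (by rw [Set.uIcc_of_le ht.le]; exact hGc x)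
  obtain ⟨L, hL⟩ := exists_clm_integral t ht.le G hGc
  have hLR : ∀ x, L (R x) = R (L x) := by
    intro x
    rw [hL, hL, ← R.intervalIntegral_comp_comm (hGi x)]
    refine intervalIntegral.integral_congr fun r hr => ?_
    rw [Set.uIcc_of_le ht.le] at hr
    exact hGR r hr.1 x
  have hkc : IntervalIntegrable k volume 0 t :=
    (intervalIntegral.continuousOn_primitive_interval' (intervalIntegrable_weight α hα l 0 t)
      (a := 0) Set.left_mem_uIcc).intervalIntegrable
  have hLN : ∀ z ∈ D, L (l • z - A z) = phiConst α l t • z - G t z := by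
    intro z hz
    have h1 : ∫ s in (0:ℝ)..t, G s (l • z - A z) =
        ∫ s in (0:ℝ)..t, (k s • z - (e s • S s) z) := by
      refine intervalIntegral.integral_congr fun r hr => ?_
      rw [Set.uIcc_of_le ht.le] at hr
      exact hGN r hr.1 z hz
    rw [hL, h1, intervalIntegral.integral_sub (hkc.smul_continuousOn (by fun_prop))
      (hci t ht.le z), intervalIntegral.integral_smul_const, ← hG t ht.le]
    rfl
  let M : X →L[ℂ] X := k t • ContinuousLinearMap.id ℂ X - e t • S t
  have hMx : ∀ x, M x = k t • x - e t • S t x := fun x => rfl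
  have hGt := mem_and_sub_of_comm D A μ R hR hR1 l (G t) M (hGR t ht.le)
    (fun x => by simp [hMx, hSR t ht.le]) (hGN t ht.le)
  have hLt := mem_and_sub_of_comm D A μ R hR hR1 l L
    (phiConst α l t • ContinuousLinearMap.id ℂ X - G t) hLR
    (fun x => by simp [hGR t ht.le]) hLN
  have hkt : k t = e t * cConst α l t := by
    simp only [k, cConst, e]
    rw [← intervalIntegral.integral_const_mul]
    refine intervalIntegral.integral_congr fun r _ => ?_
    have h : Complex.exp (-l * (r : ℂ)) =
        Complex.exp (-l * (t : ℂ)) * Complex.exp (l * ((t - r : ℝ) : ℂ)) := by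
      rw [← Complex.exp_add]
      congr 1
      push_cast
      ring
    simp only [h]
    ring
  have hMc : ∀ x, M x = e t • cSop S α l t x := by
    intro x
    simp [hMx, hkt, cSop, smul_sub, smul_smul]
  have het : e t ≠ 0 := Complex.exp_ne_zero _
  -- `(e t)⁻¹ T` is a generalized inverse of `M`.
  have hMT : ∀ x, M ((e t)⁻¹ • T (M x)) = M x := by
    intro x
    have h := congrArg (fun F : X →L[ℂ] X => F x) hT
    simp only [ContinuousLinearMap.comp_apply] at h
    simp only [hMc, map_smul, smul_smul, inv_mul_cancel₀ het, one_smul, h]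
  refine ⟨(phiConst α l t)⁻¹ • (L + (e t)⁻¹ • (G t).comp (T.comp (G t))), fun x => ?_, ?_⟩
  · exact D.smul_mem _ (D.add_mem (hLt x).1 (D.smul_mem _ (hGt _).1))
  · intro x hx
    set y := l • x - A x with hy
    have h1 := (hLt y).2
    have h2 := (hGt ((e t)⁻¹ • T (G t y))).2
    have h3 : G t y = M x := hGN t ht.le x hx
    rw [h3, hMT] at h2
    simp only [sub_apply, smul_apply,
      ContinuousLinearMap.id_apply, h3] at h1
    simp only [add_apply, smul_apply,
      ContinuousLinearMap.comp_apply, h3, map_smul, map_add] at h2 ⊢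
    calc _ = (phiConst α l t)⁻¹ • ((l • L y - A (L y)) +
          (l • (e t)⁻¹ • G t (T (M x)) - (e t)⁻¹ • A (G t (T (M x))))) := by module
      _ = y := by
        rw [h1, h2, sub_add_cancel, smul_smul, inv_mul_cancel₀ hphi, one_smul]
end
end
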